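/- arXiv:2007.08815 — 2 statements merged into one kernel-verified Lean document; each statement's English description precedes it below -/
import Mathlib

section
/- Fix an integer d ≥ 1, p ∈ (1,∞), a penalty function φ, and let (μ_t)_{t≥0} be a convolution semigroup in 𝒫_p(ℝ^d). Then for every 0 < s < t and every f ∈ C₀(ℝ^d), S(s)(S(t−s)f)(x) ≤ S(t)f(x) for all x ∈ ℝ^d. -/
open MeasureTheory Filter Topology ENNReal NNReal Set ZeroAtInfty
noncomputable section

/-- Euclidean space ℝ^d. -/
abbrev Ed (d : ℕ) := EuclideanSpace ℝ (Fin d)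

/-- `𝒫_p(ℝ^d)`: Borel probability measures with finite `p`-th moment. -/
def MemPp {d : ℕ} (p : ℝ) (μ : Measure (Ed d)) : Prop :=
  IsProbabilityMeasure μ ∧ ∫⁻ x, (‖x‖₊ : ℝ≥0∞) ^ p ∂μ < ∞

/-- `γ` is a coupling of `μ` and `ν`. -/
def IsCoupling {d : ℕ} (γ : Measure (Ed d × Ed d)) (μ ν : Measure (Ed d)) : Prop :=
  γ.map Prod.fst = μ ∧ γ.map Prod.snd = ν

/-- The `p`-Wasserstein distance `𝒲_p(μ, ν)`. -/
def Wp {d : ℕ} (p : ℝ) (μ ν : Measure (Ed d)) : ℝ :=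
  (⨅ γ ∈ {γ : Measure (Ed d × Ed d) | IsCoupling γ μ ν},
    (∫⁻ q, (‖q.2 - q.1‖₊ : ℝ≥0∞) ^ p ∂γ) ^ (1 / p)).toReal

/-- The scaled penalty `φ_t(r) = t·φ(r/t)` for `t > 0`; `φ_0(0) = 0`, `φ_0(r) = ∞` for `r > 0`. -/
def phit (φ : ℝ≥0 → ℝ≥0∞) (t : ℝ) (r : ℝ≥0) : ℝ≥0∞ :=
  if 0 < t then (t.toNNReal : ℝ≥0∞) * φ (r / t.toNNReal) else (if r = 0 then 0 else ∞)

/-- `φ` is a penalty function: lower semicontinuous, convex, increasing, not constant,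
`φ(0) = 0`, and `x ↦ φ(x^{1/p})` is convex. -/
structure IsPenalty (p : ℝ) (φ : ℝ≥0 → ℝ≥0∞) : Prop where
  lsc : LowerSemicontinuous φ
  convex : ∀ a b l m : ℝ≥0, l + m = 1 →
    φ (l * a + m * b) ≤ (l : ℝ≥0∞) * φ a + (m : ℝ≥0∞) * φ b
  mono : Monotone φ
  not_const : ∃ a b, φ a ≠ φ b
  map_zero : φ 0 = 0
  convex_rpow : ∀ a b l m : ℝ≥0, l + m = 1 →
    φ ((l * a + m * b) ^ (1 / p)) ≤ (l : ℝ≥0∞) * φ (a ^ (1 / p)) + (m : ℝ≥0∞) * φ (b ^ (1 / p))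

/-- The convex conjugate `φ*(y) = sup_{x ≥ 0} (xy − φ(x))`. -/
def phiStar (φ : ℝ≥0 → ℝ≥0∞) (y : ℝ≥0) : ℝ≥0∞ :=
  ⨆ x : ℝ≥0, ((x * y : ℝ≥0) : ℝ≥0∞) - φ x

/-- The one-step operator `S(t)f(x) = sup_ν ( ∫ f(x+y) ν(dy) − φ_t(𝒲_p(μ_t, ν)) )`. -/
def Sop {d : ℕ} (p : ℝ) (φ : ℝ≥0 → ℝ≥0∞) (μt : Measure (Ed d)) (t : ℝ)
    (f : Ed d → ℝ) (x : Ed d) : ℝ :=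
  sSup { r : ℝ | ∃ ν : Measure (Ed d), MemPp p ν ∧ ∃ c : ℝ, 0 ≤ c ∧
    phit φ t (Wp p μt ν).toNNReal ≤ ENNReal.ofReal c ∧ r = (∫ y, f (x + y) ∂ν) - c }

/-- The iterated operator `𝒮ⁿ(t) = S(2⁻ⁿ)^{∘ k} ∘ S(t − k·2⁻ⁿ)`, `k = ⌊2ⁿ t⌋`. -/
def SiterN {d : ℕ} (p : ℝ) (φ : ℝ≥0 → ℝ≥0∞) (μ : ℝ → Measure (Ed d)) (n : ℕ) (t : ℝ)
    (f : Ed d → ℝ) : Ed d → ℝ :=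
  (fun g => Sop p φ (μ ((2 : ℝ) ^ n)⁻¹) ((2 : ℝ) ^ n)⁻¹ g)^[⌊(2:ℝ)^n * t⌋₊]
    (Sop p φ (μ (t - ⌊(2:ℝ)^n * t⌋₊ * ((2:ℝ)^n)⁻¹)) (t - ⌊(2:ℝ)^n * t⌋₊ * ((2:ℝ)^n)⁻¹) f)

/-- The limiting operator `𝒮(t)f = lim_n 𝒮ⁿ(t)f` (a decreasing limit, i.e. an infimum). -/
def Slim {d : ℕ} (p : ℝ) (φ : ℝ≥0 → ℝ≥0∞) (μ : ℝ → Measure (Ed d)) (t : ℝ)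
    (f : Ed d → ℝ) (x : Ed d) : ℝ :=
  ⨅ n : ℕ, SiterN p φ μ n t f x

/-- `f ∈ C₀(ℝ^d)`: continuous and vanishing at infinity. -/
def IsC0 {d : ℕ} (f : Ed d → ℝ) : Prop :=
  Continuous f ∧ Tendsto f (cocompact (Ed d)) (𝓝 0)

/-- `(μ_t)_{t ≥ 0}` is a convolution semigroup in `𝒫_p(ℝ^d)`. -/
def IsConvSemigroup {d : ℕ} (p : ℝ) (μ : ℝ → Measure (Ed d)) : Prop :=
  μ 0 = Measure.dirac 0 ∧ (∀ s t : ℝ, 0 ≤ s → 0 ≤ t → μ (s + t) = (μ s).conv (μ t)) ∧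
    ∀ t : ℝ, 0 ≤ t → MemPp p (μ t)

/-- `𝒲_p(μ_t, δ_0) → 0` as `t ↓ 0`. -/
def WContinuousAtZero {d : ℕ} (p : ℝ) (μ : ℝ → Measure (Ed d)) : Prop :=
  Tendsto (fun t => Wp p (μ t) (Measure.dirac 0)) (𝓝[>] (0:ℝ)) (𝓝 0)

/-- The semigroup of the underlying Lévy process, `S^μ(t)f(x) = ∫ f(x+y) μ_t(dy)`. -/
def Smu {d : ℕ} (μ : ℝ → Measure (Ed d)) (t : ℝ) (f : Ed d → ℝ) (x : Ed d) : ℝ :=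
  ∫ y, f (x + y) ∂(μ t)

/-- `f ∈ D(A^μ)` with `A^μ f = Af`: `(S^μ(t)f − f)/t → Af` uniformly as `t ↓ 0`. -/
def HasGenerator {d : ℕ} (μ : ℝ → Measure (Ed d)) (f Af : Ed d → ℝ) : Prop :=
  TendstoUniformly (fun t x => (Smu μ t f x - f x) / t) Af (𝓝[>] (0:ℝ))

/-- `f ∈ C₀¹(ℝ^d)`: continuously differentiable, vanishing at infinity, with gradient
vanishing at infinity. -/
def IsC01 {d : ℕ} (f : Ed d → ℝ) : Prop :=
  IsC0 f ∧ ContDiff ℝ 1 f ∧ Tendsto (fun x => gradient f x) (cocompact (Ed d)) (𝓝 0)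



def wE {d : ℕ} (p : ℝ) (μ ν : Measure (Ed d)) : ℝ≥0∞ :=
  ⨅ γ ∈ {γ : Measure (Ed d × Ed d) | IsCoupling γ μ ν},
    (∫⁻ q, (‖q.2 - q.1‖₊ : ℝ≥0∞) ^ p ∂γ) ^ (1 / p)

def wN {d : ℕ} (p : ℝ) (μ ν : Measure (Ed d)) : ℝ≥0 := (wE p μ ν).toNNReal

lemma wE_le {d : ℕ} {p : ℝ} {μ ν : Measure (Ed d)} {γ : Measure (Ed d × Ed d)}
    (hγ : IsCoupling γ μ ν) :
    wE p μ ν ≤ (∫⁻ q, (‖q.2 - q.1‖₊ : ℝ≥0∞) ^ p ∂γ) ^ (1 / p) :=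
  iInf₂_le (f := fun (γ : Measure (Ed d × Ed d)) (_ : γ ∈ {γ | IsCoupling γ μ ν}) =>
    (∫⁻ q, (‖q.2 - q.1‖₊ : ℝ≥0∞) ^ p ∂γ) ^ (1 / p)) γ hγ

lemma Wp_eq {d : ℕ} (p : ℝ) (μ ν : Measure (Ed d)) : (Wp p μ ν).toNNReal = wN p μ ν := by
  change ((wE p μ ν).toReal).toNNReal = _
  simp [wN, ENNReal.toReal]

lemma moment_add {α : Type*} [MeasurableSpace α] {d : ℕ} {p : ℝ} (hp : 1 < p) (m : Measure α)
    (F G : α → Ed d) (hF : Measurable F)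
    (h1 : ∫⁻ a, (‖F a‖₊ : ℝ≥0∞) ^ p ∂m < ∞) (h2 : ∫⁻ a, (‖G a‖₊ : ℝ≥0∞) ^ p ∂m < ∞) :
    ∫⁻ a, (‖F a + G a‖₊ : ℝ≥0∞) ^ p ∂m < ∞ := by
  calc ∫⁻ a, (‖F a + G a‖₊ : ℝ≥0∞) ^ p ∂m
      ≤ ∫⁻ a, 2 ^ (p - 1) * ((‖F a‖₊ : ℝ≥0∞) ^ p + (‖G a‖₊ : ℝ≥0∞) ^ p) ∂m := by
        apply lintegral_mono
        intro a
        refine le_trans ?_ (ENNReal.rpow_add_le_mul_rpow_add_rpow _ _ hp.le)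
        apply ENNReal.rpow_le_rpow _ (by linarith)
        exact_mod_cast nnnorm_add_le _ _
    _ = 2 ^ (p - 1) * (∫⁻ a, (‖F a‖₊ : ℝ≥0∞) ^ p ∂m + ∫⁻ a, (‖G a‖₊ : ℝ≥0∞) ^ p ∂m) := by
        rw [lintegral_const_mul', lintegral_add_left]
        · fun_prop
        · exact ENNReal.rpow_ne_top_of_nonneg (by linarith) (by simp)
    _ < ∞ := ENNReal.mul_lt_top (ENNReal.rpow_lt_top_of_nonneg (by linarith) (by simp))
        (ENNReal.add_lt_top.2 ⟨h1, h2⟩)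

lemma wE_lt_top {d : ℕ} {p : ℝ} (hp : 1 < p) {μ ν : Measure (Ed d)} (hμ : MemPp p μ)
    (hν : MemPp p ν) : wE p μ ν < ∞ := by
  have := hμ.1
  have := hν.1
  have hc : IsCoupling (μ.prod ν) μ ν := by
    constructor <;> simp [Measure.map_fst_prod, Measure.map_snd_prod]
  refine lt_of_le_of_lt (iInf₂_le (μ.prod ν) hc) ?_
  refine ENNReal.rpow_lt_top_of_nonneg (by positivity) (ne_of_lt ?_)
  have := moment_add hp (μ.prod ν) (fun q => q.2) (fun q => - q.1) measurable_snd ?_ ?_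
  · simpa [sub_eq_add_neg] using this
  · rw [← lintegral_map (f := fun z : Ed d => (‖z‖₊ : ℝ≥0∞) ^ p) (by fun_prop) measurable_snd,
      hc.2]
    exact hν.2
  · simp only [nnnorm_neg]
    rw [← lintegral_map (f := fun z : Ed d => (‖z‖₊ : ℝ≥0∞) ^ p) (by fun_prop) measurable_fst,
      hc.1]
    exact hμ.2

lemma coe_wN {d : ℕ} {p : ℝ} (hp : 1 < p) {μ ν : Measure (Ed d)} (hμ : MemPp p μ)
    (hν : MemPp p ν) : (wN p μ ν : ℝ≥0∞) = wE p μ ν :=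
  ENNReal.coe_toNNReal (wE_lt_top hp hμ hν).ne

lemma exists_coupling {d : ℕ} {p : ℝ} (hp : 1 < p) {μ ν : Measure (Ed d)} (hμ : MemPp p μ)
    (hν : MemPp p ν) (ε : ℝ≥0) (hε : 0 < ε) : ∃ γ, IsCoupling γ μ ν ∧
      (∫⁻ q, (‖q.2 - q.1‖₊ : ℝ≥0∞) ^ p ∂γ) ^ (1 / p) ≤ ((wN p μ ν + ε : ℝ≥0) : ℝ≥0∞) := by
  have h : wE p μ ν < ((wN p μ ν + ε : ℝ≥0) : ℝ≥0∞) := by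
    rw [← coe_wN hp hμ hν]
    exact_mod_cast lt_add_of_pos_right _ hε
  unfold wE at h
  simp only [iInf_lt_iff] at h
  obtain ⟨γ, hγ, h⟩ := h
  exact ⟨γ, hγ, h.le⟩

lemma wN_self {d : ℕ} {p : ℝ} (hp : 1 < p) (μ : Measure (Ed d)) : wN p μ μ = 0 := by
  have : wE p μ μ ≤ 0 := by
    have hc : IsCoupling (μ.map (fun z => (z, z))) μ μ := by
      constructor <;> rw [Measure.map_map (by fun_prop) (by fun_prop)] <;> exact Measure.map_id
    refine le_trans (wE_le hc) ?_
    rw [lintegral_map (by fun_prop) (by fun_prop)]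
    have h0 : (0:ℝ) < p := by linarith
    simp [h0, ENNReal.zero_rpow_of_pos]
  simp [wN, le_antisymm this bot_le]

open ProbabilityTheory in
def kerI {α : Type*} [MeasurableSpace α] {d : ℕ} (π : ℕ → Measure α) (I : Ed d → ℕ)
    (hI : Measurable I) : Kernel (Ed d) α :=
  (Kernel.ofFunOfCountable π).comap I hI

open ProbabilityTheory in
lemma kerI_apply {α : Type*} [MeasurableSpace α] {d : ℕ} (π : ℕ → Measure α) (I : Ed d → ℕ)
    (hI : Measurable I) (y : Ed d) : kerI π I hI y = π (I y) := rfl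

open ProbabilityTheory in
instance {α : Type*} [MeasurableSpace α] {d : ℕ} (π : ℕ → Measure α)
    [∀ i, IsProbabilityMeasure (π i)] (I : Ed d → ℕ)
    (hI : Measurable I) : IsMarkovKernel (kerI π I hI) :=
  ⟨fun y => by rw [kerI_apply]; infer_instance⟩

lemma lintegral_I {d : ℕ} (ν : Measure (Ed d)) (I : Ed d → ℕ) (hI : Measurable I) (N : ℕ)
    (hN : ∀ y, I y < N) (F : ℕ → ℝ≥0∞) :
    ∫⁻ y, F (I y) ∂ν = ∑ i ∈ Finset.range N, ν (I ⁻¹' {i}) * F i := by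
  rw [← lintegral_map (f := F) (by fun_prop) hI, lintegral_countable',
    tsum_eq_sum (s := Finset.range N)]
  · refine Finset.sum_congr rfl fun i _ => ?_
    rw [Measure.map_apply hI (by simp), mul_comm]
  · intro i hi
    rw [Measure.map_apply hI (by simp)]
    have : I ⁻¹' {i} = ∅ := by
      ext y
      have := hN y
      simp at hi ⊢
      omega
    simp [this]

open ProbabilityTheory in
def glue {d : ℕ} (ν : Measure (Ed d)) (κ : ℕ → Measure (Ed d)) (I : Ed d → ℕ)
    (hI : Measurable I) : Measure (Ed d) :=
  (ν ⊗ₘ kerI κ I hI).map (fun q => q.1 + q.2)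

lemma lintegral_glue {d : ℕ} (ν : Measure (Ed d)) [SFinite ν] (κ : ℕ → Measure (Ed d))
    [∀ i, IsProbabilityMeasure (κ i)] (I : Ed d → ℕ) (hI : Measurable I) (F : Ed d → ℝ≥0∞)
    (hF : Measurable F) :
    ∫⁻ w, F w ∂(glue ν κ I hI) = ∫⁻ y, ∫⁻ z, F (y + z) ∂(κ (I y)) ∂ν := by
  unfold glue
  rw [lintegral_map hF (by fun_prop), Measure.lintegral_compProd (by fun_prop)]
  rfl

instance {d : ℕ} (ν : Measure (Ed d)) [IsProbabilityMeasure ν] (κ : ℕ → Measure (Ed d))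
    [∀ i, IsProbabilityMeasure (κ i)] (I : Ed d → ℕ) (hI : Measurable I) :
    IsProbabilityMeasure (glue ν κ I hI) := by
  unfold glue
  exact Measure.isProbabilityMeasure_map (by fun_prop)

open ProbabilityTheory in
lemma integral_glue {d : ℕ} (ν : Measure (Ed d)) [IsProbabilityMeasure ν] (κ : ℕ → Measure (Ed d))
    [∀ i, IsProbabilityMeasure (κ i)] (I : Ed d → ℕ) (hI : Measurable I) (F : Ed d → ℝ)
    (hF : Continuous F) (C : ℝ) (hC : ∀ z, |F z| ≤ C) :
    Integrable (fun y => ∫ z, F (y + z) ∂(κ (I y))) ν ∧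
    ∫ w, F w ∂(glue ν κ I hI) = ∫ y, ∫ z, F (y + z) ∂(κ (I y)) ∂ν := by
  have hintg : Integrable (fun q : Ed d × Ed d => F (q.1 + q.2)) (ν ⊗ₘ kerI κ I hI) :=
    Integrable.of_bound (by fun_prop) C (Eventually.of_forall fun q => hC _)
  refine ⟨MeasureTheory.Integrable.integral_compProd (κ := Kernel.const Unit ν)
    (η := Kernel.prodMkLeft Unit (kerI κ I hI)) (a := ()) hintg, ?_⟩
  unfold glue
  rw [integral_map (by fun_prop) (by fun_prop), Measure.integral_compProd hintg]
  rfl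

lemma memPp_glue {d : ℕ} {p : ℝ} (hp : 1 < p) (ν : Measure (Ed d)) (hν : MemPp p ν)
    (κ : ℕ → Measure (Ed d)) (hκ : ∀ i, MemPp p (κ i)) (I : Ed d → ℕ) (hI : Measurable I) (N : ℕ)
    (hN : ∀ y, I y < N) : MemPp p (glue ν κ I hI) := by
  have := hν.1
  have := fun i => (hκ i).1
  refine ⟨inferInstance, ?_⟩
  unfold glue
  rw [lintegral_map (by fun_prop) (by fun_prop)]
  apply moment_add hp _ _ _ measurable_fst
  · rw [Measure.lintegral_compProd (by fun_prop)]
    simpa using hν.2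
  · rw [Measure.lintegral_compProd (by fun_prop)]
    simp only [kerI_apply]
    rw [lintegral_I ν I hI N hN (fun i => ∫⁻ z, (‖z‖₊ : ℝ≥0∞) ^ p ∂(κ i))]
    refine ENNReal.sum_lt_top.2 fun i _ => ENNReal.mul_lt_top (measure_lt_top _ _) (hκ i).2

open ProbabilityTheory in
lemma wE_glue_le {d : ℕ} {p : ℝ} (hp : 1 < p) (μ₁ μ₂ ν : Measure (Ed d)) 
    [IsProbabilityMeasure μ₁] [IsProbabilityMeasure μ₂] [IsProbabilityMeasure ν]
    (κ : ℕ → Measure (Ed d)) [∀ i, IsProbabilityMeasure (κ i)]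
    (I : Ed d → ℕ) (hI : Measurable I) (N : ℕ) (hN : ∀ y, I y < N)
    (γ : Measure (Ed d × Ed d)) (hγ : IsCoupling γ μ₁ ν)
    (π : ℕ → Measure (Ed d × Ed d)) (hπ : ∀ i, IsCoupling (π i) μ₂ (κ i)) :
    wE p (μ₁.conv μ₂) (glue ν κ I hI) ≤ (∫⁻ q, (‖q.2 - q.1‖₊ : ℝ≥0∞) ^ p ∂γ) ^ (1 / p) +
      (∑ i ∈ Finset.range N, ν (I ⁻¹' {i}) * ∫⁻ q, (‖q.2 - q.1‖₊ : ℝ≥0∞) ^ p ∂(π i)) ^ (1 / p) := by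
  have : IsProbabilityMeasure γ := by
    constructor
    have := congrArg (fun m => m univ) hγ.1
    simpa [Measure.map_apply measurable_fst] using this
  have : ∀ i, IsProbabilityMeasure (π i) := by
    intro i
    constructor
    have := congrArg (fun m => m univ) (hπ i).1
    simpa [Measure.map_apply measurable_fst] using this
  set Γ := γ ⊗ₘ ((kerI π I hI).comap Prod.snd measurable_snd) with hΓ
  have key : ∀ F : (Ed d × Ed d) × (Ed d × Ed d) → ℝ≥0∞, Measurable F →
      ∫⁻ q, F q ∂Γ = ∫⁻ a, ∫⁻ b, F (a, b) ∂(π (I a.2)) ∂γ := by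
    intro F hF
    rw [hΓ, Measure.lintegral_compProd hF]
    rfl
  have hmap : ∀ (F : Ed d → ℝ≥0∞), Measurable F → ∀ i, ∫⁻ b, F b.1 ∂(π i) = ∫⁻ z, F z ∂μ₂ := by
    intro F hF i
    rw [← (hπ i).1, lintegral_map hF measurable_fst]
  have hmap' : ∀ (F : Ed d → ℝ≥0∞), Measurable F → ∀ i, ∫⁻ b, F b.2 ∂(π i) = ∫⁻ z, F z ∂(κ i) := by
    intro F hF i
    rw [← (hπ i).2, lintegral_map hF measurable_snd]
  have hc : IsCoupling (Γ.map (fun q => (q.1.1 + q.2.1, q.1.2 + q.2.2)))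
      (μ₁.conv μ₂) (glue ν κ I hI) := by
    constructor
    · refine Measure.ext_of_lintegral _ fun F hF => ?_
      rw [Measure.map_map (by fun_prop) (by fun_prop), lintegral_map hF (by fun_prop),
        key _ (by fun_prop), Measure.lintegral_conv hF]
      simp only [Function.comp]
      have : ∀ a : Ed d × Ed d, ∫⁻ b, F (a.1 + b.1) ∂(π (I a.2)) = ∫⁻ z, F (a.1 + z) ∂μ₂ :=
        fun a => hmap (fun z => F (a.1 + z)) (by fun_prop) _
      simp only [this]
      rw [← hγ.1, lintegral_map _ measurable_fst]
      exact Measurable.lintegral_prod_right' (f := fun q : Ed d × Ed d => F (q.1 + q.2)) (by fun_prop)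
    · refine Measure.ext_of_lintegral _ fun F hF => ?_
      rw [Measure.map_map (by fun_prop) (by fun_prop), lintegral_map hF (by fun_prop),
        key _ (by fun_prop), lintegral_glue _ _ _ _ _ hF]
      simp only [Function.comp]
      have : ∀ a : Ed d × Ed d, ∫⁻ b, F (a.2 + b.2) ∂(π (I a.2)) =
          ∫⁻ z, F (a.2 + z) ∂(κ (I a.2)) :=
        fun a => hmap' (fun z => F (a.2 + z)) (by fun_prop) _
      simp only [this]
      rw [← hγ.2, lintegral_map _ measurable_snd]
      exact Measurable.lintegral_kernel_prod_right' (κ := kerI κ I hI)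
        (f := fun q : Ed d × Ed d => F (q.1 + q.2)) (by fun_prop)
  refine le_trans (wE_le hc) ?_
  rw [lintegral_map (by fun_prop) (by fun_prop)]
  have hp0 : 0 ≤ 1 / p := by positivity
  calc _ ≤ (∫⁻ q, ((fun q : (Ed d × Ed d) × (Ed d × Ed d) => (‖q.1.2 - q.1.1‖₊ : ℝ≥0∞)) +
          fun q : (Ed d × Ed d) × (Ed d × Ed d) => (‖q.2.2 - q.2.1‖₊ : ℝ≥0∞)) q
          ^ p ∂Γ) ^ (1 / p) := by
        apply ENNReal.rpow_le_rpow _ hp0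
        apply lintegral_mono
        intro q
        apply ENNReal.rpow_le_rpow _ (by linarith)
        simp only [Pi.add_apply]
        rw [add_sub_add_comm]
        exact_mod_cast nnnorm_add_le _ _
    _ ≤ _ := ENNReal.lintegral_Lp_add_le (by fun_prop) (by fun_prop) hp.le
    _ = _ := by
        congr 2
        · rw [key _ (by fun_prop)]
          simp
        · rw [key _ (by fun_prop)]
          simp only
          rw [← lintegral_I ν I hI N hN, ← hγ.2, lintegral_map (by fun_prop) measurable_snd]

lemma wN_glue_le {d : ℕ} {p : ℝ} (hp : 1 < p) {μ₁ μ₂ ν : Measure (Ed d)} (h₁ : MemPp p μ₁)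
    (h₂ : MemPp p μ₂) (hν : MemPp p ν) (h₁₂ : MemPp p (μ₁.conv μ₂))
    (κ : ℕ → Measure (Ed d)) (hκ : ∀ i, MemPp p (κ i))
    (I : Ed d → ℕ) (hI : Measurable I) (N : ℕ) (hN : ∀ y, I y < N) :
    wN p (μ₁.conv μ₂) (glue ν κ I hI) ≤ wN p μ₁ ν +
      (∑ i ∈ Finset.range N, (ν (I ⁻¹' {i})).toNNReal * (wN p μ₂ (κ i)) ^ p) ^ (1 / p) := by
  have hp0 : 0 < p := by linarith
  have hg := memPp_glue hp ν hν κ hκ I hI N hN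
  have main : ∀ ε : ℝ≥0, 0 < ε → wN p (μ₁.conv μ₂) (glue ν κ I hI) ≤ (wN p μ₁ ν + ε) +
      (∑ i ∈ Finset.range N, (ν (I ⁻¹' {i})).toNNReal * (wN p μ₂ (κ i) + ε) ^ p) ^ (1 / p) := by
    intro ε hε
    obtain ⟨γ, hγ, hγ'⟩ := exists_coupling hp h₁ hν ε hε
    choose π hπ hπ' using fun i => exists_coupling hp h₂ (hκ i) ε hε
    have := h₁.1
    have := h₂.1
    have := hν.1
    have := fun i => (hκ i).1
    have := wE_glue_le hp μ₁ μ₂ ν κ I hI N hN γ hγ π hπ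
    rw [← coe_wN hp h₁₂ hg] at this
    rw [← ENNReal.coe_le_coe]
    refine this.trans ?_
    rw [ENNReal.coe_add, ENNReal.coe_rpow_of_nonneg _ (by positivity), ENNReal.ofNNReal_finsetSum]
    gcongr with i hi
    rw [ENNReal.coe_mul, ENNReal.coe_toNNReal (measure_ne_top _ _),
      ENNReal.coe_rpow_of_nonneg _ (by positivity)]
    gcongr
    rw [← ENNReal.rpow_inv_le_iff hp0, ← one_div]
    exact hπ' i
  have hp1 : 0 ≤ 1 / p := by positivity
  have hlim : Tendsto (fun ε : ℝ≥0 => (wN p μ₁ ν + ε) +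
      (∑ i ∈ Finset.range N, (ν (I ⁻¹' {i})).toNNReal * (wN p μ₂ (κ i) + ε) ^ p) ^ (1 / p))
      (𝓝[>] 0) (𝓝 ((wN p μ₁ ν + 0) +
      (∑ i ∈ Finset.range N, (ν (I ⁻¹' {i})).toNNReal * (wN p μ₂ (κ i) + 0) ^ p) ^ (1 / p))) := by
    apply Tendsto.mono_left _ nhdsWithin_le_nhds
    apply Continuous.tendsto (f := (fun ε : ℝ≥0 => (wN p μ₁ ν + ε) +
      (∑ i ∈ Finset.range N, (ν (I ⁻¹' {i})).toNNReal * (wN p μ₂ (κ i) + ε) ^ p) ^ (1 / p)))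
    refine Continuous.add (by fun_prop) ((NNReal.continuous_rpow_const hp1).comp ?_)
    refine continuous_finsetSum _ fun i _ => continuous_const.mul
      ((NNReal.continuous_rpow_const hp0.le).comp (by fun_prop))
  simp only [add_zero] at hlim
  exact ge_of_tendsto hlim (eventually_mem_nhdsWithin.mono fun ε hε => main ε hε)

lemma jensen {ψ : ℝ≥0 → ℝ≥0∞} (hψ : ∀ a b l m : ℝ≥0, l + m = 1 →
    ψ (l * a + m * b) ≤ (l : ℝ≥0∞) * ψ a + (m : ℝ≥0∞) * ψ b) (w a : ℕ → ℝ≥0) (S : Finset ℕ) :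
    ((∑ i ∈ S, w i : ℝ≥0) : ℝ≥0∞) * ψ ((∑ i ∈ S, w i * a i) / ∑ i ∈ S, w i) ≤
      ∑ i ∈ S, (w i : ℝ≥0∞) * ψ (a i) := by
  induction S using Finset.induction_on with
  | empty => simp
  | insert j S hj ih =>
    rw [Finset.sum_insert hj, Finset.sum_insert hj, Finset.sum_insert hj]
    refine le_trans ?_ (add_le_add le_rfl ih)
    set W := ∑ i ∈ S, w i with hW
    set A := ∑ i ∈ S, w i * a i with hA
    by_cases h0 : W = 0
    · have hA0 : A = 0 := by
        rw [hA]
        refine Finset.sum_eq_zero fun i hi => ?_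
        rw [hW, Finset.sum_eq_zero_iff] at h0
        simp [h0 i hi]
      by_cases h1 : w j = 0
      · simp [h0, h1]
      · simp [h0, hA0, mul_div_cancel_left₀ _ h1]
    have hne : w j + W ≠ 0 := by
      intro h
      exact h0 (by simpa using (add_eq_zero.1 h).2)
    have hh := hψ (a j) (A / W) (w j / (w j + W)) (W / (w j + W)) (by field_simp)
    have e1 : w j / (w j + W) * a j + W / (w j + W) * (A / W) = (w j * a j + A) / (w j + W) := by
      field_simp
    rw [e1] at hh
    refine (mul_le_mul_right hh _).trans (le_of_eq ?_)
    rw [mul_add, ← mul_assoc, ← mul_assoc, ← ENNReal.coe_mul, ← ENNReal.coe_mul,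
      mul_div_cancel₀ _ hne, mul_div_cancel₀ _ hne]

lemma phit_glue_le {d : ℕ} {p : ℝ} (hp : 1 < p) {φ : ℝ≥0 → ℝ≥0∞} (hφ : IsPenalty p φ)
    {s u : ℝ} (hs : 0 < s) (hu : 0 < u)
    {μ₁ μ₂ ν : Measure (Ed d)} (h₁ : MemPp p μ₁)
    (h₂ : MemPp p μ₂) (hν : MemPp p ν) (h₁₂ : MemPp p (μ₁.conv μ₂))
    (κ : ℕ → Measure (Ed d)) (hκ : ∀ i, MemPp p (κ i))
    (I : Ed d → ℕ) (hI : Measurable I) (N : ℕ) (hN : ∀ y, I y < N) :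
    phit φ (s + u) (wN p (μ₁.conv μ₂) (glue ν κ I hI)) ≤ phit φ s (wN p μ₁ ν) +
      ∫⁻ y, phit φ u (wN p μ₂ (κ (I y))) ∂ν := by
  have hp0 : 0 < p := by linarith
  have := hν.1
  have hW := wN_glue_le hp h₁ h₂ hν h₁₂ κ hκ I hI N hN
  rw [lintegral_I ν I hI N hN (fun i => phit φ u (wN p μ₂ (κ i)))]
  simp only [phit, hs, hu, add_pos hs hu, if_true]
  set S := s.toNNReal
  set U := u.toNNReal
  have hS : 0 < S := by simpa [S] using hs
  have hU : 0 < U := by simpa [U] using hu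
  rw [Real.toNNReal_add hs.le hu.le]
  change ((S + U : ℝ≥0) : ℝ≥0∞) * _ ≤ _
  set w : ℕ → ℝ≥0 := fun i => (ν (I ⁻¹' {i})).toNNReal with hw
  set M := (∑ i ∈ Finset.range N, w i * (wN p μ₂ (κ i)) ^ p) ^ (1 / p) with hM
  have hwc : ∀ i, ν (I ⁻¹' {i}) = (w i : ℝ≥0∞) := fun i =>
    (ENNReal.coe_toNNReal (measure_ne_top _ _)).symm
  have hsum : ∑ i ∈ Finset.range N, w i = 1 := by
    have := lintegral_I ν I hI N hN (fun _ => 1)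
    simp only [lintegral_one, measure_univ, mul_one, hwc] at this
    exact_mod_cast this.symm
  have hj := jensen hφ.convex_rpow w (fun i => (wN p μ₂ (κ i) / U) ^ p) (Finset.range N)
  rw [hsum] at hj
  have e1 : ∀ a : ℝ≥0, (a ^ p) ^ (1 / p) = a := fun a => by
    rw [← NNReal.rpow_mul, mul_one_div_cancel hp0.ne', NNReal.rpow_one]
  have e2 : (∑ i ∈ Finset.range N, w i * (wN p μ₂ (κ i) / U) ^ p) ^ (1 / p) = M / U := by
    simp only [NNReal.div_rpow, ← mul_div_assoc]
    rw [← Finset.sum_div, NNReal.div_rpow, e1]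
  simp only [e1, div_one, e2, ENNReal.coe_one, one_mul] at hj
  have hne : S + U ≠ 0 := (add_pos hS hU).ne'
  have hcv := hφ.convex (wN p μ₁ ν / S) (M / U) (S / (S + U)) (U / (S + U)) (by field_simp)
  have e3 : S / (S + U) * (wN p μ₁ ν / S) + U / (S + U) * (M / U) =
      (wN p μ₁ ν + M) / (S + U) := by field_simp
  rw [e3] at hcv
  calc _ ≤ ((S + U : ℝ≥0) : ℝ≥0∞) * φ ((wN p μ₁ ν + M) / (S + U)) := by
        gcongr
        exact hφ.mono (by gcongr)
    _ ≤ _ := mul_le_mul_right hcv _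
    _ = S * φ (wN p μ₁ ν / S) + U * φ (M / U) := by
      rw [mul_add, ← mul_assoc, ← mul_assoc, ← ENNReal.coe_mul, ← ENNReal.coe_mul,
        mul_div_cancel₀ _ hne, mul_div_cancel₀ _ hne]
    _ ≤ _ := by
      gcongr
      refine (mul_le_mul_right hj _).trans (le_of_eq ?_)
      rw [Finset.mul_sum]
      refine Finset.sum_congr rfl fun i _ => ?_
      rw [hwc]
      ring

/-- The set whose supremum defines `Sop`. -/
def SopSet {d : ℕ} (p : ℝ) (φ : ℝ≥0 → ℝ≥0∞) (μt : Measure (Ed d)) (t : ℝ)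
    (f : Ed d → ℝ) (x : Ed d) : Set ℝ :=
  { r : ℝ | ∃ ν : Measure (Ed d), MemPp p ν ∧ ∃ c : ℝ, 0 ≤ c ∧
    phit φ t (wN p μt ν) ≤ ENNReal.ofReal c ∧ r = (∫ y, f (x + y) ∂ν) - c }

lemma Sop_eq {d : ℕ} (p : ℝ) (φ : ℝ≥0 → ℝ≥0∞) (μt : Measure (Ed d)) (t : ℝ)
    (f : Ed d → ℝ) (x : Ed d) : Sop p φ μt t f x = sSup (SopSet p φ μt t f x) := by
  simp only [Sop, SopSet, Wp_eq]

lemma SopSet_mem {d : ℕ} {p : ℝ} (hp : 1 < p) {φ : ℝ≥0 → ℝ≥0∞} (hφ : IsPenalty p φ)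
    {μt : Measure (Ed d)} (hμ : MemPp p μt) (t : ℝ) (f : Ed d → ℝ) (x : Ed d) :
    (∫ y, f (x + y) ∂μt) ∈ SopSet p φ μt t f x :=
  ⟨μt, hμ, 0, le_rfl, by simp [wN_self hp, phit, hφ.map_zero], by simp⟩

lemma abs_int_le {d : ℕ} (ν : Measure (Ed d)) [IsProbabilityMeasure ν] (f : Ed d → ℝ) (C : ℝ)
    (hC : ∀ z, |f z| ≤ C) : |∫ y, f y ∂ν| ≤ C := by
  have := norm_integral_le_of_norm_le_const (μ := ν) (f := f) (C := C)
    (Eventually.of_forall fun z => hC z)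
  simpa using this

lemma SopSet_le {d : ℕ} {p : ℝ} {φ : ℝ≥0 → ℝ≥0∞} 
    {μt : Measure (Ed d)} (t : ℝ) (f : Ed d → ℝ) (x : Ed d) (C : ℝ) (hC : ∀ z, |f z| ≤ C) :
    ∀ r ∈ SopSet p φ μt t f x, r ≤ C := by
  rintro r ⟨ν, hν, c, hc, -, rfl⟩
  have := hν.1
  have := (abs_le.1 (abs_int_le ν (fun y => f (x + y)) C (fun z => hC _))).2
  linarith

lemma abs_Sop_le {d : ℕ} {p : ℝ} (hp : 1 < p) {φ : ℝ≥0 → ℝ≥0∞} (hφ : IsPenalty p φ)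
    {μt : Measure (Ed d)} (hμ : MemPp p μt) (t : ℝ) (f : Ed d → ℝ) (x : Ed d)
    (C : ℝ) (hC : ∀ z, |f z| ≤ C) : |Sop p φ μt t f x| ≤ C := by
  rw [Sop_eq, abs_le]
  have := hμ.1
  refine ⟨?_, csSup_le ⟨_, SopSet_mem hp hφ hμ t f x⟩ (SopSet_le t f x C hC)⟩
  refine le_trans ?_ (le_csSup ⟨C, SopSet_le t f x C hC⟩ (SopSet_mem hp hφ hμ t f x))
  exact (abs_le.1 (abs_int_le μt (fun y => f (x + y)) C (fun z => hC _))).1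

lemma int_shift_le {d : ℕ} (ν : Measure (Ed d)) [IsProbabilityMeasure ν] (f : Ed d → ℝ) (C : ℝ)
    (hf : Continuous f) (hC : ∀ z, |f z| ≤ C) {ε δ : ℝ}
    (h : ∀ a b, dist a b < δ → |f a - f b| ≤ ε) {a b : Ed d} (hab : dist a b < δ) :
    ∫ y, f (a + y) ∂ν ≤ ∫ y, f (b + y) ∂ν + ε := by
  have hi : ∀ a : Ed d, Integrable (fun y => f (a + y)) ν := fun a =>
    Integrable.of_bound (by fun_prop) C (Eventually.of_forall fun q => hC _)
  have : ∫ y, f (a + y) ∂ν ≤ ∫ y, (f (b + y) + ε) ∂ν := by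
    apply integral_mono (hi a) ((hi b).add (integrable_const _))
    intro y
    have := (abs_le.1 (h (a + y) (b + y) (by simpa using hab))).2
    simp only [Pi.add_apply]
    linarith
  rw [integral_add (hi b) (integrable_const _)] at this
  simpa using this

lemma Sop_shift_le {d : ℕ} {p : ℝ} (hp : 1 < p) {φ : ℝ≥0 → ℝ≥0∞} (hφ : IsPenalty p φ)
    {μt : Measure (Ed d)} (hμ : MemPp p μt) (t : ℝ) (f : Ed d → ℝ) (C : ℝ)
    (hf : Continuous f) (hC : ∀ z, |f z| ≤ C) {ε δ : ℝ}
    (h : ∀ a b, dist a b < δ → |f a - f b| ≤ ε) {a b : Ed d} (hab : dist a b < δ) :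
    Sop p φ μt t f a ≤ Sop p φ μt t f b + ε := by
  rw [Sop_eq, Sop_eq]
  refine csSup_le ⟨_, SopSet_mem hp hφ hμ t f a⟩ ?_
  rintro r ⟨ν, hν, c, hc, hc', rfl⟩
  have := hν.1
  have h1 := int_shift_le ν f C hf hC h hab
  have h2 := le_csSup ⟨C, SopSet_le t f b C hC⟩
    (show (∫ y, f (b + y) ∂ν) - c ∈ SopSet p φ μt t f b from ⟨ν, hν, c, hc, hc', rfl⟩)
  linarith

lemma Sop_continuous {d : ℕ} {p : ℝ} (hp : 1 < p) {φ : ℝ≥0 → ℝ≥0∞} (hφ : IsPenalty p φ)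
    {μt : Measure (Ed d)} (hμ : MemPp p μt) (t : ℝ) (f : Ed d → ℝ) (C : ℝ)
    (hf : Continuous f) (hC : ∀ z, |f z| ≤ C)
    (h : ∀ ε > 0, ∃ δ > 0, ∀ a b, dist a b < δ → |f a - f b| ≤ ε) :
    Continuous (Sop p φ μt t f) := by
  rw [Metric.continuous_iff]
  intro b ε hε
  obtain ⟨δ, hδ, h⟩ := h (ε / 2) (by linarith)
  refine ⟨δ, hδ, fun a hab => ?_⟩
  have h1 := Sop_shift_le hp hφ hμ t f C hf hC h hab
  have h2 := Sop_shift_le hp hφ hμ t f C hf hC h (by rwa [dist_comm] at hab : dist b a < δ)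
  rw [Real.dist_eq, abs_lt]
  constructor <;> linarith

lemma main_eps {d : ℕ} {p : ℝ} (hp : 1 < p) {φ : ℝ≥0 → ℝ≥0∞} (hφ : IsPenalty p φ)
    {s u : ℝ} (hs : 0 < s) (hu : 0 < u)
    {μ₁ μ₂ ν : Measure (Ed d)} (h₁ : MemPp p μ₁)
    (h₂ : MemPp p μ₂) (hν : MemPp p ν) (h₁₂ : MemPp p (μ₁.conv μ₂))
    (f : Ed d → ℝ) (C : ℝ) (hf : Continuous f) (hC : ∀ z, |f z| ≤ C)
    (huc : ∀ ε > 0, ∃ δ > 0, ∀ a b, dist a b < δ → |f a - f b| ≤ ε) (x : Ed d)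
    (c : ℝ) (hc0 : 0 ≤ c) (hc : phit φ s (wN p μ₁ ν) ≤ ENNReal.ofReal c) (ε : ℝ) (hε : 0 < ε) :
    (∫ y, Sop p φ μ₂ u f (x + y) ∂ν) - c ≤
      Sop p φ (μ₁.conv μ₂) (s + u) f x + (3 + 4 * C) * ε := by
  have := hν.1
  have hC0 : 0 ≤ C := (abs_nonneg _).trans (hC 0)
  obtain ⟨δ, hδ, hfδ⟩ := huc ε hε
  set g := Sop p φ μ₂ u f with hg
  have hgc : Continuous g := Sop_continuous hp hφ h₂ u f C hf hC huc
  have hgC : ∀ z, |g z| ≤ C := fun z => abs_Sop_le hp hφ h₂ u f z C hC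
  set e := TopologicalSpace.denseSeq (Ed d) with he
  have hsel : ∀ i, ∃ κ : Measure (Ed d), MemPp p κ ∧ ∃ c : ℝ, 0 ≤ c ∧
      phit φ u (wN p μ₂ κ) ≤ ENNReal.ofReal c ∧
      g (x + e i) - ε < (∫ y, f (x + e i + y) ∂κ) - c := by
    intro i
    have : g (x + e i) - ε < sSup (SopSet p φ μ₂ u f (x + e i)) := by
      rw [hg, Sop_eq]; linarith
    obtain ⟨r, ⟨κ, hκ, c, h0, h1, rfl⟩, hr⟩ :=
      exists_lt_of_lt_csSup ⟨_, SopSet_mem hp hφ h₂ u f (x + e i)⟩ this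
    exact ⟨κ, hκ, c, h0, h1, hr⟩
  choose κ hκ cc hcc0 hcc hsel using hsel
  have := fun i => (hκ i).1
  have hm : TendstoInMeasure ν (fun n y => SimpleFunc.nearestPt e n y) atTop (fun y => y) :=
    tendstoInMeasure_of_tendsto_ae
      (fun n => (SimpleFunc.measurable _).aestronglyMeasurable)
      (Eventually.of_forall fun y => SimpleFunc.tendsto_nearestPt
        (TopologicalSpace.denseRange_denseSeq (Ed d) y))
  have hm' := hm (ENNReal.ofReal δ) (by simpa using hδ)
  obtain ⟨n, hn⟩ := ((tendsto_order.1 hm').2 (ENNReal.ofReal ε) (by simpa using hε)).exists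
  set B : Set (Ed d) := {y | ENNReal.ofReal δ ≤ edist (SimpleFunc.nearestPt e n y) y} with hB
  have hBm : MeasurableSet B := by
    apply measurableSet_le measurable_const
    exact (SimpleFunc.measurable _).edist measurable_id
  have hνB : ν.real B ≤ ε := by
    rw [Measure.real]
    exact ENNReal.toReal_le_of_le_ofReal hε.le hn.le
  set I : Ed d → ℕ := fun y => SimpleFunc.nearestPtInd e n y with hIdef
  have hI : Measurable I := SimpleFunc.measurable _
  have hN : ∀ y, I y < n + 1 := fun y => Nat.lt_succ_of_le (SimpleFunc.nearestPtInd_le e n y)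
  have hccb : ∀ i, cc i ≤ 2 * C + ε := by
    intro i
    have h1 := (abs_le.1 (hgC (x + e i))).1
    have h2 := (abs_le.1 (abs_int_le (κ i) (fun y => f (x + e i + y)) C (fun z => hC _))).2
    linarith [hsel i]
  have hicc : Integrable (fun y => cc (I y)) ν := by
    refine Integrable.of_bound ?_ (2 * C + ε) (Eventually.of_forall fun y => ?_)
    · exact (Measurable.comp (g := cc) measurable_from_nat hI).aestronglyMeasurable
    · rw [Real.norm_eq_abs, abs_of_nonneg (hcc0 _)]
      exact hccb _
  obtain ⟨hif, hglue⟩ := integral_glue ν κ I hI (fun w => f (x + w)) (by fun_prop) C (fun z => hC _)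
  have hpt : ∀ y, g (x + y) ≤ (∫ z, f (x + (y + z)) ∂(κ (I y)) - cc (I y)) +
      (3 * ε + B.indicator (fun _ => 4 * C) y) := by
    intro y
    by_cases hy : y ∈ B
    · rw [Set.indicator_of_mem hy]
      have h0 := (abs_le.1 (hgC (x + y))).2
      have h1 := (abs_le.1 (hgC (x + e (I y)))).1
      have h2 := (abs_le.1 (abs_int_le (κ (I y)) (fun z => f (x + e (I y) + z)) C
        (fun z => hC _))).2
      have h3 := (abs_le.1 (abs_int_le (κ (I y)) (fun z => f (x + (y + z))) C
        (fun z => hC _))).1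
      linarith [hsel (I y)]
    · rw [Set.indicator_of_notMem hy]
      have hd : dist (e (I y)) y < δ := by
        have : edist (e (I y)) y < ENNReal.ofReal δ := not_le.1 hy
        rwa [edist_lt_ofReal] at this
      have hd1 : dist (x + e (I y)) (x + y) < δ := by simpa using hd
      have hd2 : dist (x + y) (x + e (I y)) < δ := by rwa [dist_comm]
      have h1 := Sop_shift_le hp hφ h₂ u f C hf hC hfδ hd2
      have h2 := int_shift_le (κ (I y)) f C hf hC hfδ hd1
      simp only [← add_assoc]
      linarith [hsel (I y)]
  have hind : Integrable (B.indicator (fun _ => 4 * C)) ν := (integrable_const _).indicator hBm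
  have hintg : ∫ y, g (x + y) ∂ν ≤ (∫ w, f (x + w) ∂(glue ν κ I hI) - ∫ y, cc (I y) ∂ν) +
      (3 * ε + ν.real B * (4 * C)) := by
    have hgi : Integrable (fun y => g (x + y)) ν :=
      Integrable.of_bound (by fun_prop) C (Eventually.of_forall fun q => hgC _)
    have h3 : Integrable (fun y => 3 * ε + B.indicator (fun _ => 4 * C) y) ν :=
      (integrable_const _).add hind
    refine (integral_mono hgi ((hif.sub hicc).add h3) hpt).trans (le_of_eq ?_)
    rw [integral_add' (hif.sub hicc) h3, integral_sub' hif hicc, hglue,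
      integral_add (integrable_const _) hind, integral_indicator_const _ hBm]
    simp
  have hmem : (∫ w, f (x + w) ∂(glue ν κ I hI)) - (c + ∫ y, cc (I y) ∂ν) ∈
      SopSet p φ (μ₁.conv μ₂) (s + u) f x := by
    refine ⟨_, memPp_glue hp ν hν κ hκ I hI (n + 1) hN, _,
      add_nonneg hc0 (integral_nonneg fun y => hcc0 _), ?_, rfl⟩
    refine (phit_glue_le hp hφ hs hu h₁ h₂ hν h₁₂ κ hκ I hI (n + 1) hN).trans ?_
    rw [ENNReal.ofReal_add hc0 (integral_nonneg fun y => hcc0 _),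
      ofReal_integral_eq_lintegral_ofReal hicc (Eventually.of_forall fun y => hcc0 _)]
    exact add_le_add hc (lintegral_mono fun y => hcc _)
  have hfin := le_csSup ⟨C, SopSet_le (s + u) f x C hC⟩ hmem
  rw [← Sop_eq] at hfin
  have : ν.real B * (4 * C) ≤ ε * (4 * C) := by gcongr
  linarith

/-- key lemma: `S(s)(S(t−s)f) ≤ S(t)f` for `0 < s < t`. -/
theorem stmt_5 (d : ℕ) (hd : 1 ≤ d) (p : ℝ) (hp : 1 < p)
    (φ : ℝ≥0 → ℝ≥0∞) (hφ : IsPenalty p φ)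
    (μ : ℝ → Measure (Ed d)) (hμ : IsConvSemigroup p μ)
    (s t : ℝ) (hs : 0 < s) (hst : s < t) (f : C₀(Ed d, ℝ)) (x : Ed d) :
    Sop p φ (μ s) s (Sop p φ (μ (t - s)) (t - s) (⇑f)) x ≤ Sop p φ (μ t) t (⇑f) x := by
  
  obtain ⟨-, hconv, hmem⟩ := hμ
  have hu : 0 < t - s := by linarith
  have h₁ := hmem s hs.le
  have h₂ := hmem (t - s) hu.le
  have e1 : s + (t - s) = t := by ring
  have hct := hconv s (t - s) hs.le hu.le
  rw [e1] at hct
  have h₁₂ := hmem t (by linarith)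
  rw [hct] at h₁₂
  have hC : ∀ z, |f z| ≤ ‖f.toBCF‖ := fun z => f.toBCF.norm_coe_le_norm z
  have huc : ∀ ε > 0, ∃ δ > 0, ∀ a b : Ed d, dist a b < δ → |f a - f b| ≤ ε := by
    intro ε hε
    obtain ⟨δ, hδ, h⟩ := Metric.uniformContinuous_iff.1
      (ZeroAtInftyContinuousMap.uniformContinuous f) ε hε
    exact ⟨δ, hδ, fun a b hab => (h hab).le⟩
  rw [Sop_eq]
  refine csSup_le ⟨_, SopSet_mem hp hφ h₁ s _ x⟩ ?_
  rintro r ⟨ν, hν, c, hc0, hc, rfl⟩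
  refine le_of_forall_pos_le_add fun η hη => ?_
  have hK : 0 < 3 + 4 * ‖f.toBCF‖ := by positivity
  have := main_eps hp hφ hs hu h₁ h₂ hν h₁₂ f _ f.continuous hC huc x c hc0 hc
    (η / (3 + 4 * ‖f.toBCF‖)) (by positivity)
  rwa [mul_div_cancel₀ _ hK.ne', ← hct, e1] at this
end
end

section
/- Fix an integer d ≥ 1, p ∈ (1,∞), a penalty function φ, and let (μ_t)_{t≥0} be a convolution semigroup in 𝒫_p(ℝ^d). Then for every t ≥ 0 and f, g ∈ C₀(ℝ^d): (i) the decreasing pointwise limit 𝒮(t)f := lim_{n→∞} 𝒮^n(t)f exists and the convergence is uniform on ℝ^d; (ii) 𝒮(t)f ∈ C₀(ℝ^d); (iii) 𝒮(t)0 = 0; (iv) f ≤ g implies 𝒮(t)f ≤ 𝒮(t)g; (v) ‖𝒮(t)f − 𝒮(t)g‖_∞ ≤ ‖f − g‖_∞; (vi) 𝒮(t)(λf + (1−λ)g)(x) ≤ λ𝒮(t)f(x) + (1−λ)𝒮(t)g(x) for all λ ∈ [0,1] and x ∈ ℝ^d. -/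
open MeasureTheory Filter Topology ENNReal NNReal Set ZeroAtInfty
noncomputable section

/-- Bounded, with an almost-Lipschitz modulus (equivalently bounded uniformly continuous). -/
structure Good {d : ℕ} (f : Ed d → ℝ) : Prop where
  bdd : ∃ M, ∀ x, |f x| ≤ M
  al : ∀ ε > 0, ∃ C, 0 ≤ C ∧ ∀ a b, f a ≤ f b + ε + C * ‖a - b‖

lemma Good.continuous {d : ℕ} {f : Ed d → ℝ} (hf : Good f) : Continuous f := by
  rw [Metric.continuous_iff]
  intro b ε hε
  obtain ⟨C, hC, h⟩ := hf.al (ε / 2) (by positivity)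
  refine ⟨ε / (2 * (C + 1)), by positivity, fun a hab => ?_⟩
  rw [dist_eq_norm] at hab
  have h1 := h a b
  have h2 := h b a
  rw [norm_sub_rev] at h2
  have h3 : C * ‖a - b‖ < ε / 2 := by
    calc C * ‖a - b‖ ≤ (C + 1) * ‖a - b‖ := by gcongr; linarith
      _ < (C + 1) * (ε / (2 * (C + 1))) := by gcongr
      _ = ε / 2 := by field_simp
  rw [Real.dist_eq, abs_lt]
  constructor <;> linarith

lemma Good.integrable {d : ℕ} {f : Ed d → ℝ} (hf : Good f) {α : Type*} [MeasurableSpace α]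
    (γ : Measure α) [IsFiniteMeasure γ] {u : α → Ed d} (hu : Measurable u) :
    Integrable (fun q => f (u q)) γ := by
  obtain ⟨M, hM⟩ := hf.bdd
  refine Integrable.of_bound (C := M) ?_ (Eventually.of_forall fun q => hM _)
  exact (hf.continuous.measurable.comp hu).aestronglyMeasurable

lemma Good.of_isC0 {d : ℕ} {f : Ed d → ℝ} (hf : IsC0 f) : Good f := by
  have h : ∃ F : C₀(Ed d, ℝ), ⇑F = f := ⟨⟨⟨f, hf.1⟩, hf.2⟩, rfl⟩
  obtain ⟨F, rfl⟩ := h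
  have hb : ∀ x, |F x| ≤ ‖F‖ := fun x => by
    simpa using (BoundedContinuousFunction.norm_coe_le_norm F.toBCF x)
  refine ⟨⟨‖F‖, hb⟩, fun ε hε => ?_⟩
  have huc := ZeroAtInftyContinuousMap.uniformContinuous F
  rw [Metric.uniformContinuous_iff] at huc
  obtain ⟨δ, hδ, h⟩ := huc ε hε
  refine ⟨2 * ‖F‖ / δ, by positivity, fun a b => ?_⟩
  by_cases hab : dist a b < δ
  · have := h hab
    rw [Real.dist_eq, abs_lt] at this
    have : 0 ≤ 2 * ‖F‖ / δ * ‖a - b‖ := by positivity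
    linarith
  · push Not at hab
    rw [dist_eq_norm] at hab
    have h1 := hb a
    have h2 := hb b
    rw [abs_le] at h1 h2
    have : 2 * ‖F‖ ≤ 2 * ‖F‖ / δ * ‖a - b‖ := by
      rw [div_mul_eq_mul_div, le_div_iff₀ hδ]
      gcongr
    linarith

/-- `L¹` is controlled by `L^p` on probability spaces. -/
lemma l1_le {d : ℕ} {α : Type*} [MeasurableSpace α] (γ : Measure α) [IsProbabilityMeasure γ]
    {p : ℝ} (hp : 1 < p) {h : α → Ed d} (hm : Measurable h)
    (hfin : ∫⁻ q, (‖h q‖₊ : ℝ≥0∞) ^ p ∂γ ≠ ∞) :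
    Integrable (fun q => ‖h q‖) γ ∧
      ∫ q, ‖h q‖ ∂γ ≤ ((∫⁻ q, (‖h q‖₊ : ℝ≥0∞) ^ p ∂γ) ^ (1 / p)).toReal := by
  have key : ∫⁻ q, ‖h q‖ₑ ∂γ ≤ (∫⁻ q, (‖h q‖₊ : ℝ≥0∞) ^ p ∂γ) ^ (1 / p) := by
    have := eLpNorm_le_eLpNorm_of_exponent_le (μ := γ) (p := 1) (q := ENNReal.ofReal p)
      (by rw [← ENNReal.ofReal_one]; exact ENNReal.ofReal_le_ofReal hp.le)
      hm.aestronglyMeasurable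
    rw [eLpNorm_one_eq_lintegral_enorm, eLpNorm_eq_lintegral_rpow_enorm_toReal
      (by simp; linarith) (by simp), ENNReal.toReal_ofReal (by linarith)] at this
    exact this
  have hfin' : (∫⁻ q, (‖h q‖₊ : ℝ≥0∞) ^ p ∂γ) ^ (1 / p) ≠ ∞ :=
    ENNReal.rpow_ne_top_of_nonneg (by positivity) hfin
  refine ⟨Integrable.norm ⟨hm.aestronglyMeasurable, lt_of_le_of_lt key hfin'.lt_top⟩, ?_⟩
  rw [integral_norm_eq_lintegral_enorm hm.aestronglyMeasurable]
  exact ENNReal.toReal_mono hfin' key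

lemma integral_le_aff {α : Type*} [MeasurableSpace α] (γ : Measure α) [IsProbabilityMeasure γ]
    {F G H : α → ℝ} (hF : Integrable F γ) (hG : Integrable G γ) (hH : Integrable H γ) {a b : ℝ}
    (h : ∀ q, F q ≤ G q + a + b * H q) :
    ∫ q, F q ∂γ ≤ ∫ q, G q ∂γ + a + b * ∫ q, H q ∂γ := by
  have h1 : Integrable (fun q => G q + a) γ := hG.add (integrable_const _)
  have h2 : Integrable (fun q => b * H q) γ := hH.const_mul _
  have := integral_mono hF (h1.add h2) h
  have e : ∫ q, ((fun q => G q + a) + fun q => b * H q) q ∂γ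
      = ∫ q, G q ∂γ + a + b * ∫ q, H q ∂γ := by
    rw [integral_add' h1 h2, integral_add hG (integrable_const _), integral_const_mul]
    simp
  rwa [e] at this

/-- transport cost of a plan -/
def cost {d : ℕ} (p : ℝ) (γ : Measure (Ed d × Ed d)) : ℝ≥0∞ :=
  ∫⁻ q, (‖q.2 - q.1‖₊ : ℝ≥0∞) ^ p ∂γ

/-- admissible plans -/
structure Adm {d : ℕ} (p : ℝ) (φ : ℝ≥0 → ℝ≥0∞) (μ : Measure (Ed d)) (t : ℝ)
    (γ : Measure (Ed d × Ed d)) (c : ℝ) : Prop where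
  fst : γ.map Prod.fst = μ
  fin : cost p γ ≠ ∞
  nonneg : 0 ≤ c
  pen : phit φ t ((cost p γ) ^ (1 / p)).toNNReal ≤ ENNReal.ofReal c

lemma prob_of_fst {d : ℕ} {γ : Measure (Ed d × Ed d)} {μ : Measure (Ed d)}
    [IsProbabilityMeasure μ] (h : γ.map Prod.fst = μ) : IsProbabilityMeasure γ := by
  constructor
  have : γ.map Prod.fst univ = 1 := by rw [h]; simp
  rwa [Measure.map_apply measurable_fst MeasurableSet.univ] at this

lemma phit_mono {p : ℝ} {φ : ℝ≥0 → ℝ≥0∞} (hφ : IsPenalty p φ) (t : ℝ) : Monotone (phit φ t) := by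
  intro a b hab
  unfold phit
  split_ifs with h1 h2 h3 h3
  · gcongr
    apply hφ.mono
    gcongr
  · rfl
  · simp
  · subst h3; exact absurd (le_antisymm hab bot_le) h2
  · rfl

lemma phit_zero {p : ℝ} {φ : ℝ≥0 → ℝ≥0∞} (hφ : IsPenalty p φ) (t : ℝ) : phit φ t 0 = 0 := by
  unfold phit
  split_ifs with h1 h2
  · simp [hφ.map_zero]
  · rfl
  · exact absurd rfl h2

/-- moment of second marginal -/
lemma memPp_snd {d : ℕ} {p : ℝ} (hp : 1 < p) {μ : Measure (Ed d)} (hμ : MemPp p μ)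
    {γ : Measure (Ed d × Ed d)} (h1 : γ.map Prod.fst = μ) (h2 : cost p γ ≠ ∞) :
    MemPp p (γ.map Prod.snd) := by
  have := hμ.1
  have := prob_of_fst h1
  refine ⟨Measure.isProbabilityMeasure_map measurable_snd.aemeasurable, ?_⟩
  rw [lintegral_map (by fun_prop) measurable_snd]
  have h3 : ∫⁻ q, (‖q.1‖₊ : ℝ≥0∞) ^ p ∂γ < ∞ := by
    have := hμ.2
    rwa [← h1, lintegral_map (by fun_prop) measurable_fst] at this
  refine lt_of_le_of_lt ?_ (ENNReal.lintegral_rpow_add_lt_top_of_lintegral_rpow_lt_top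
    (f := fun q : Ed d × Ed d => (‖q.1‖₊ : ℝ≥0∞))
    (g := fun q : Ed d × Ed d => (‖q.2 - q.1‖₊ : ℝ≥0∞)) (by fun_prop) h3 h2.lt_top hp.le)
  refine lintegral_mono fun q => ?_
  refine ENNReal.rpow_le_rpow ?_ (by linarith)
  simp only [Pi.add_apply]
  norm_cast
  calc ‖q.2‖₊ = ‖q.1 + (q.2 - q.1)‖₊ := by congr 1; abel
    _ ≤ _ := nnnorm_add_le _ _

lemma Wp_le {d : ℕ} {p : ℝ} (hp : 1 < p) {μ ν : Measure (Ed d)}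
    {γ : Measure (Ed d × Ed d)} (h : IsCoupling γ μ ν) (h2 : cost p γ ≠ ∞) :
    (Wp p μ ν).toNNReal ≤ ((cost p γ) ^ (1 / p)).toNNReal := by
  have hfin' : (cost p γ) ^ (1 / p) ≠ ∞ :=
    ENNReal.rpow_ne_top_of_nonneg (by positivity) h2
  rw [← NNReal.coe_le_coe]
  unfold Wp
  rw [Real.coe_toNNReal _ ENNReal.toReal_nonneg]
  exact ENNReal.toReal_mono hfin' (iInf₂_le γ h)

lemma Sop_set_bdd {d : ℕ} (p : ℝ) (φ : ℝ≥0 → ℝ≥0∞) (μt : Measure (Ed d)) (t : ℝ)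
    {f : Ed d → ℝ} (x : Ed d) {M : ℝ} (hM : ∀ x, |f x| ≤ M) (hf : Good f) :
    ∀ r ∈ { r : ℝ | ∃ ν : Measure (Ed d), MemPp p ν ∧ ∃ c : ℝ, 0 ≤ c ∧
    phit φ t (Wp p μt ν).toNNReal ≤ ENNReal.ofReal c ∧ r = (∫ y, f (x + y) ∂ν) - c }, r ≤ M := by
  rintro r ⟨ν, hν, c, hc, -, rfl⟩
  have := hν.1
  have : ∫ y, f (x + y) ∂ν ≤ ∫ y, M ∂ν := by
    refine integral_mono (hf.integrable ν (by fun_prop)) (by simp) fun y => (abs_le.1 (hM _)).2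
  simp at this
  linarith

lemma le_Sop_of_adm {d : ℕ} {p : ℝ} (hp : 1 < p) {φ : ℝ≥0 → ℝ≥0∞} (hφ : IsPenalty p φ)
    {μ : Measure (Ed d)} (hμ : MemPp p μ) {t : ℝ} {f : Ed d → ℝ} (hf : Good f)
    {γ : Measure (Ed d × Ed d)} {c : ℝ} (h : Adm p φ μ t γ c) (x : Ed d) :
    ∫ q, f (x + q.2) ∂γ - c ≤ Sop p φ μ t f x := by
  obtain ⟨M, hM⟩ := hf.bdd
  refine le_csSup ⟨M, Sop_set_bdd p φ μ t x hM hf⟩ ?_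
  refine ⟨γ.map Prod.snd, memPp_snd hp hμ h.fst h.fin, c, h.nonneg, ?_, ?_⟩
  · exact (phit_mono hφ t (Wp_le hp ⟨h.fst, rfl⟩ h.fin)).trans h.pen
  · rw [integral_map measurable_snd.aemeasurable]
    exact (hf.continuous.comp (by fun_prop)).aestronglyMeasurable

lemma adm_diag {d : ℕ} {p : ℝ} (hp : 1 < p) {φ : ℝ≥0 → ℝ≥0∞} (hφ : IsPenalty p φ)
    (μ : Measure (Ed d)) (t : ℝ) :
    Adm p φ μ t (μ.map (fun z => (z, z))) 0 := by
  have hc : cost p (μ.map (fun z => (z, z))) = 0 := by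
    unfold cost
    rw [lintegral_map (by fun_prop) (by fun_prop)]
    simp [show 0 < p by linarith]
  refine ⟨?_, by simp [hc], le_rfl, ?_⟩
  · rw [Measure.map_map measurable_fst (by fun_prop)]
    exact Measure.map_id
  · rw [hc, ENNReal.zero_rpow_of_pos (by positivity)]
    simp [phit_zero hφ]

lemma exists_adm {d : ℕ} {p : ℝ} (hp : 1 < p) {φ : ℝ≥0 → ℝ≥0∞} (hφ : IsPenalty p φ)
    {μ : Measure (Ed d)} (hμ : MemPp p μ) {t : ℝ} {f : Ed d → ℝ} (hf : Good f)
    {x : Ed d} {r : ℝ} (hr : r < Sop p φ μ t f x) :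
    ∃ γ c, Adm p φ μ t γ c ∧ r < ∫ q, f (x + q.2) ∂γ - c := by
  have := hμ.1
  have hne : { r : ℝ | ∃ ν : Measure (Ed d), MemPp p ν ∧ ∃ c : ℝ, 0 ≤ c ∧
    phit φ t (Wp p μ ν).toNNReal ≤ ENNReal.ofReal c ∧ r = (∫ y, f (x + y) ∂ν) - c }.Nonempty := by
    have h := adm_diag hp hφ μ t
    refine ⟨_, μ.map (fun z => (z, z)) |>.map Prod.snd, memPp_snd hp hμ h.fst h.fin, 0, le_rfl,
      ?_, rfl⟩
    exact (phit_mono hφ t (Wp_le hp ⟨h.fst, rfl⟩ h.fin)).trans h.pen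
  obtain ⟨_, ⟨ν, hν, c, hc, hpen, rfl⟩, hr⟩ := exists_lt_of_lt_csSup hne hr
  have := hν.1
  set ε := (∫ y, f (x + y) ∂ν) - c - r with hε
  have hεpos : 0 < ε := by linarith
  obtain ⟨C, hC, hal⟩ := hf.al (ε / 4) (by positivity)
  -- near optimal plan
  set δ := ε / (4 * (C + 1)) with hδ
  have hδpos : 0 < δ := by positivity
  set W := Wp p μ ν with hW
  have hWnn : 0 ≤ W := ENNReal.toReal_nonneg
  have hprod : IsCoupling (μ.prod ν) μ ν := by
    constructor
    · simp
    · simp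
  have hprodfin : cost p (μ.prod ν) ≠ ∞ := by
    unfold cost
    have h1 : ∫⁻ q : Ed d × Ed d, (‖q.1‖₊ : ℝ≥0∞) ^ p ∂(μ.prod ν) < ∞ := by
      have := hμ.2
      rwa [← hprod.1, lintegral_map (by fun_prop) measurable_fst] at this
    have h2 : ∫⁻ q : Ed d × Ed d, (‖q.2‖₊ : ℝ≥0∞) ^ p ∂(μ.prod ν) < ∞ := by
      have := hν.2
      rwa [← hprod.2, lintegral_map (by fun_prop) measurable_snd] at this
    refine (lt_of_le_of_lt ?_ (ENNReal.lintegral_rpow_add_lt_top_of_lintegral_rpow_lt_top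
      (f := fun q : Ed d × Ed d => (‖q.2‖₊ : ℝ≥0∞))
      (g := fun q : Ed d × Ed d => (‖q.1‖₊ : ℝ≥0∞)) (by fun_prop) h2 h1 hp.le)).ne
    refine lintegral_mono fun q => ?_
    refine ENNReal.rpow_le_rpow ?_ (by linarith)
    simp only [Pi.add_apply]
    norm_cast
    exact nnnorm_sub_le _ _
  have hnear : ∃ γ0, IsCoupling γ0 μ ν ∧ (cost p γ0) ^ (1 / p) < ENNReal.ofReal (W + δ) := by
    by_contra hcon
    push Not at hcon
    have h1 : ENNReal.ofReal (W + δ) ≤ ⨅ γ ∈ {γ : Measure (Ed d × Ed d) | IsCoupling γ μ ν},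
      (∫⁻ q, (‖q.2 - q.1‖₊ : ℝ≥0∞) ^ p ∂γ) ^ (1 / p) := le_iInf₂ fun γ hγ => hcon γ hγ
    have h2 : (⨅ γ ∈ {γ : Measure (Ed d × Ed d) | IsCoupling γ μ ν},
      (∫⁻ q, (‖q.2 - q.1‖₊ : ℝ≥0∞) ^ p ∂γ) ^ (1 / p)) ≠ ∞ :=
      ne_top_of_le_ne_top (ENNReal.rpow_ne_top_of_nonneg (by positivity) hprodfin)
        (iInf₂_le (μ.prod ν) hprod)
    have h3 := ENNReal.toReal_mono h2 h1
    rw [ENNReal.toReal_ofReal (by positivity)] at h3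
    have : W + δ ≤ W := h3
    linarith
  obtain ⟨γ0, hγ0, hcost⟩ := hnear
  have := prob_of_fst hγ0.1
  have hfin0 : cost p γ0 ≠ ∞ := by
    intro h
    rw [h, ENNReal.top_rpow_of_pos (by positivity)] at hcost
    exact not_top_lt hcost
  set θ := W / (W + δ) with hθ
  have hWδ : 0 < W + δ := by positivity
  have hθ0 : 0 ≤ θ := by positivity
  have hθ1 : 1 - θ = δ / (W + δ) := by rw [hθ]; field_simp; ring
  set T : Ed d × Ed d → Ed d × Ed d := fun q => (q.1, q.1 + θ • (q.2 - q.1)) with hT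
  have hTm : Measurable T := by fun_prop
  have hcostT : (cost p (γ0.map T)) ^ (1 / p) = ENNReal.ofReal θ * (cost p γ0) ^ (1 / p) := by
    unfold cost
    rw [lintegral_map (by fun_prop) hTm]
    have : ∀ q : Ed d × Ed d, (‖(T q).2 - (T q).1‖₊ : ℝ≥0∞) ^ p
        = ENNReal.ofReal θ ^ p * (‖q.2 - q.1‖₊ : ℝ≥0∞) ^ p := by
      intro q
      rw [← ENNReal.mul_rpow_of_nonneg _ _ (by linarith)]
      congr 1
      simp only [hT, add_sub_cancel_left, nnnorm_smul]
      rw [ENNReal.coe_mul]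
      congr 1
      rw [← enorm_eq_nnnorm, Real.enorm_of_nonneg hθ0]
    simp_rw [this]
    rw [lintegral_const_mul _ (by fun_prop), ENNReal.mul_rpow_of_nonneg _ _ (by positivity),
      ← ENNReal.rpow_mul, mul_one_div_cancel (by linarith), ENNReal.rpow_one]
  have hcT : (cost p (γ0.map T)) ^ (1 / p) ≤ ENNReal.ofReal W := by
    rw [hcostT]
    calc _ ≤ ENNReal.ofReal θ * ENNReal.ofReal (W + δ) := by gcongr
      _ = ENNReal.ofReal W := by
        rw [← ENNReal.ofReal_mul hθ0]; congr 1; rw [hθ]; field_simp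
  have hAdm : Adm p φ μ t (γ0.map T) c := by
    refine ⟨?_, ?_, hc, ?_⟩
    · rw [Measure.map_map measurable_fst hTm]; exact hγ0.1
    · intro h
      rw [h, ENNReal.top_rpow_of_pos (by positivity)] at hcT
      exact absurd hcT (by simp)
    · refine (phit_mono hφ t ?_).trans hpen
      exact ENNReal.toNNReal_mono ENNReal.ofReal_ne_top hcT
  refine ⟨_, c, hAdm, ?_⟩
  have hint : ∫ y, f (x + y) ∂ν = ∫ q, f (x + q.2) ∂γ0 := by
    conv_lhs => rw [← hγ0.2]
    rw [integral_map measurable_snd.aemeasurable]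
    exact (hf.continuous.comp (by fun_prop)).aestronglyMeasurable
  have hint2 : ∫ q, f (x + q.2) ∂(γ0.map T) = ∫ q, f (x + (T q).2) ∂γ0 := by
    rw [integral_map hTm.aemeasurable]
    exact (hf.continuous.comp (by fun_prop)).aestronglyMeasurable
  obtain ⟨hi, hle⟩ := l1_le γ0 hp (h := fun q : Ed d × Ed d => q.2 - q.1) (by fun_prop) hfin0
  have hle2 : ∫ q, ‖q.2 - q.1‖ ∂γ0 ≤ W + δ := by
    refine hle.trans ?_
    exact ENNReal.toReal_le_of_le_ofReal hWδ.le hcost.le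
  have hmain : ∫ q, f (x + q.2) ∂γ0 ≤
      ∫ q, f (x + (T q).2) ∂γ0 + ε / 4 + C * (1 - θ) * ∫ q, ‖q.2 - q.1‖ ∂γ0 := by
    refine integral_le_aff γ0 (hf.integrable γ0 (by fun_prop)) (hf.integrable γ0 (by fun_prop)) hi
      fun q => ?_
    have := hal (x + q.2) (x + (T q).2)
    have h2 : (x + q.2) - (x + (T q).2) = (1 - θ) • (q.2 - q.1) := by
      simp only [hT]; module
    rw [h2, norm_smul, Real.norm_of_nonneg (by rw [hθ1]; positivity)] at this
    simpa [mul_assoc] using this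
  have h5 : C * (1 - θ) * ∫ q, ‖q.2 - q.1‖ ∂γ0 ≤ ε / 4 := by
    calc C * (1 - θ) * ∫ q, ‖q.2 - q.1‖ ∂γ0 ≤ C * (1 - θ) * (W + δ) := by
          have : 0 ≤ 1 - θ := by rw [hθ1]; positivity
          gcongr
      _ = C * δ := by rw [hθ1]; field_simp
      _ ≤ (C + 1) * δ := by gcongr; linarith
      _ = ε / 4 := by rw [hδ]; field_simp
  rw [hint2]
  rw [hint] at hε
  linarith

lemma Sop_le_shift {d : ℕ} {p : ℝ} (hp : 1 < p) {φ : ℝ≥0 → ℝ≥0∞} (hφ : IsPenalty p φ)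
    {μ : Measure (Ed d)} (hμ : MemPp p μ) {t : ℝ} {f g : Ed d → ℝ} (hf : Good f) (hg : Good g)
    {x x' : Ed d} {K : ℝ} (h : ∀ y, f (x + y) ≤ g (x' + y) + K) :
    Sop p φ μ t f x ≤ Sop p φ μ t g x' + K := by
  refine le_of_forall_lt fun r hr => ?_
  obtain ⟨γ, c, hadm, hr⟩ := exists_adm hp hφ hμ hf hr
  have := hμ.1
  have := prob_of_fst hadm.fst
  have h1 := le_Sop_of_adm hp hφ hμ hg hadm x'
  have h2 := integral_le_aff γ (F := fun q => f (x + q.2)) (G := fun q => g (x' + q.2))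
    (H := fun _ => 0) (a := K) (b := 0) (hf.integrable γ (by fun_prop))
    (hg.integrable γ (by fun_prop)) (by simp) (fun q => by simpa using h q.2)
  simp only [zero_mul, add_zero] at h2
  linarith

lemma Good.const {d : ℕ} (c : ℝ) : Good (fun _ : Ed d => c) :=
  ⟨⟨|c|, fun _ => le_rfl⟩, fun ε hε => ⟨0, le_rfl, fun a b => by simp; exact hε.le⟩⟩

lemma Sop_const_zero {d : ℕ} {p : ℝ} (hp : 1 < p) {φ : ℝ≥0 → ℝ≥0∞} (hφ : IsPenalty p φ)
    {μ : Measure (Ed d)} (hμ : MemPp p μ) (t : ℝ) (x : Ed d) :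
    Sop p φ μ t (fun _ => 0) x = 0 := by
  apply le_antisymm
  · refine le_of_forall_lt fun r hr => ?_
    obtain ⟨γ, c, hadm, hr⟩ := exists_adm hp hφ hμ (Good.const 0) hr
    have := hadm.nonneg
    simp at hr
    linarith
  · have := le_Sop_of_adm hp hφ hμ (Good.const 0) (adm_diag hp hφ μ t) x
    simpa using this

lemma Sop_abs_le {d : ℕ} {p : ℝ} (hp : 1 < p) {φ : ℝ≥0 → ℝ≥0∞} (hφ : IsPenalty p φ)
    {μ : Measure (Ed d)} (hμ : MemPp p μ) {t : ℝ} {f : Ed d → ℝ} (hf : Good f)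
    {M : ℝ} (hM : ∀ x, |f x| ≤ M) (x : Ed d) : |Sop p φ μ t f x| ≤ M := by
  have h0 := Sop_const_zero hp hφ hμ t x
  rw [abs_le]
  constructor
  · have := Sop_le_shift (t := t) hp hφ hμ (Good.const 0) hf (x := x) (x' := x) (K := M)
      (fun y => by have := abs_le.1 (hM (x + y)); linarith)
    linarith
  · have := Sop_le_shift (t := t) hp hφ hμ hf (Good.const 0) (x := x) (x' := x) (K := M)
      (fun y => by have := abs_le.1 (hM (x + y)); linarith)
    linarith

lemma Sop_al {d : ℕ} {p : ℝ} (hp : 1 < p) {φ : ℝ≥0 → ℝ≥0∞} (hφ : IsPenalty p φ)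
    {μ : Measure (Ed d)} (hμ : MemPp p μ) {t : ℝ} {f : Ed d → ℝ} (hf : Good f)
    {ε C : ℝ} (h : ∀ a b, f a ≤ f b + ε + C * ‖a - b‖) (a b : Ed d) :
    Sop p φ μ t f a ≤ Sop p φ μ t f b + ε + C * ‖a - b‖ := by
  have := Sop_le_shift (t := t) hp hφ hμ hf hf (x := a) (x' := b) (K := ε + C * ‖a - b‖)
    (fun y => by have := h (a + y) (b + y); simp at this; linarith)
  linarith

lemma Sop_good {d : ℕ} {p : ℝ} (hp : 1 < p) {φ : ℝ≥0 → ℝ≥0∞} (hφ : IsPenalty p φ)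
    {μ : Measure (Ed d)} (hμ : MemPp p μ) {t : ℝ} {f : Ed d → ℝ} (hf : Good f) :
    Good (Sop p φ μ t f) := by
  obtain ⟨M, hM⟩ := hf.bdd
  refine ⟨⟨M, Sop_abs_le hp hφ hμ hf hM⟩, fun ε hε => ?_⟩
  obtain ⟨C, hC, h⟩ := hf.al ε hε
  exact ⟨C, hC, Sop_al hp hφ hμ hf h⟩

lemma Good.comb {d : ℕ} {f g : Ed d → ℝ} (hf : Good f) (hg : Good g) {l : ℝ} (h0 : 0 ≤ l)
    (h1 : l ≤ 1) : Good (fun y => l * f y + (1 - l) * g y) := by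
  obtain ⟨M, hM⟩ := hf.bdd
  obtain ⟨N, hN⟩ := hg.bdd
  have h1' : 0 ≤ 1 - l := by linarith
  refine ⟨⟨l * M + (1 - l) * N, fun x => ?_⟩, fun ε hε => ?_⟩
  · calc |l * f x + (1 - l) * g x| ≤ |l * f x| + |(1 - l) * g x| := abs_add_le _ _
      _ = l * |f x| + (1 - l) * |g x| := by
        rw [abs_mul, abs_mul, abs_of_nonneg h0, abs_of_nonneg h1']
      _ ≤ _ := by gcongr; exacts [hM x, hN x]
  · obtain ⟨C, hC, h⟩ := hf.al ε hε
    obtain ⟨D, hD, h'⟩ := hg.al ε hε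
    refine ⟨l * C + (1 - l) * D, by positivity, fun a b => ?_⟩
    have e1 := mul_le_mul_of_nonneg_left (h a b) h0
    have e2 := mul_le_mul_of_nonneg_left (h' a b) h1'
    nlinarith

lemma Sop_convex {d : ℕ} {p : ℝ} (hp : 1 < p) {φ : ℝ≥0 → ℝ≥0∞} (hφ : IsPenalty p φ)
    {μ : Measure (Ed d)} (hμ : MemPp p μ) {t : ℝ} {f g : Ed d → ℝ} (hf : Good f) (hg : Good g)
    {l : ℝ} (h0 : 0 ≤ l) (h1 : l ≤ 1) (x : Ed d) :
    Sop p φ μ t (fun y => l * f y + (1 - l) * g y) x ≤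
      l * Sop p φ μ t f x + (1 - l) * Sop p φ μ t g x := by
  have h1' : 0 ≤ 1 - l := by linarith
  refine le_of_forall_lt fun r hr => ?_
  obtain ⟨γ, c, hadm, hr⟩ := exists_adm hp hφ hμ (hf.comb hg h0 h1) hr
  have := hμ.1
  have := prob_of_fst hadm.fst
  have e1 := mul_le_mul_of_nonneg_left (le_Sop_of_adm hp hφ hμ hf hadm x) h0
  have e2 := mul_le_mul_of_nonneg_left (le_Sop_of_adm hp hφ hμ hg hadm x) h1'
  rw [integral_add ((hf.integrable γ (by fun_prop)).const_mul _)
    ((hg.integrable γ (by fun_prop)).const_mul _), integral_const_mul, integral_const_mul] at hr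
  nlinarith

lemma Sop_zero_le {d : ℕ} {p : ℝ} (hp : 1 < p) {φ : ℝ≥0 → ℝ≥0∞} (hφ : IsPenalty p φ)
    {μ : Measure (Ed d)} (hμ : MemPp p μ) (hμ0 : μ = Measure.dirac 0)
    {f : Ed d → ℝ} (hf : Good f) (x : Ed d) :
    Sop p φ μ 0 f x ≤ f x := by
  refine le_of_forall_lt fun r hr => ?_
  obtain ⟨γ, c, hadm, hr⟩ := exists_adm hp hφ hμ hf hr
  refine hr.trans_le ?_
  have := hμ.1
  have := prob_of_fst hadm.fst
  have hfin' : (cost p γ) ^ (1 / p) ≠ ∞ :=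
    ENNReal.rpow_ne_top_of_nonneg (by positivity) hadm.fin
  have hz : (cost p γ) ^ (1 / p) = 0 := by
    have h := hadm.pen
    unfold phit at h
    simp only [lt_irrefl, if_false] at h
    by_contra hne
    rw [if_neg (by rw [ENNReal.toNNReal_eq_zero_iff]; tauto)] at h
    exact absurd h (by simp)
  obtain ⟨hi, hle⟩ := l1_le γ hp (h := fun q : Ed d × Ed d => q.2 - q.1) (by fun_prop) hadm.fin
  have hle' : ∫ q, ‖q.2 - q.1‖ ∂γ ≤ 0 := by
    refine hle.trans ?_
    have : (∫⁻ q, (‖q.2 - q.1‖₊ : ℝ≥0∞) ^ p ∂γ) ^ (1 / p) = 0 := hz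
    rw [this]; simp
  have hint : ∫ q, f (x + q.1) ∂γ = f x := by
    have : ∫ y, f (x + y) ∂(γ.map Prod.fst) = ∫ q, f (x + q.1) ∂γ := by
      rw [integral_map measurable_fst.aemeasurable]
      exact (hf.continuous.comp (by fun_prop)).aestronglyMeasurable
    rw [← this, hadm.fst, hμ0, integral_dirac]
    simp
  have hc := hadm.nonneg
  refine le_of_forall_pos_le_add fun ε hε => ?_
  obtain ⟨C, hC, h⟩ := hf.al ε hε
  have h2 := integral_le_aff γ (F := fun q => f (x + q.2)) (G := fun q => f (x + q.1))
    (H := fun q => ‖q.2 - q.1‖) (a := ε) (b := C) (hf.integrable γ (by fun_prop))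
    (hf.integrable γ (by fun_prop)) hi (fun q => by simpa using h (x + q.2) (x + q.1))
  have : C * ∫ q, ‖q.2 - q.1‖ ∂γ ≤ 0 := mul_nonpos_of_nonneg_of_nonpos hC hle'
  simp only [hint] at h2
  linarith

/-- coercivity of the penalty -/
lemma phit_coercive {p : ℝ} {φ : ℝ≥0 → ℝ≥0∞} (hφ : IsPenalty p φ) (t : ℝ) (M : ℝ) :
    ∃ R : ℝ, 0 ≤ R ∧ ∀ w : ℝ≥0, phit φ t w ≤ ENNReal.ofReal M → (w : ℝ) ≤ R := by
  by_cases ht : 0 < t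
  swap
  · refine ⟨0, le_rfl, fun w hw => ?_⟩
    unfold phit at hw
    rw [if_neg ht] at hw
    split_ifs at hw with h
    · simp [h]
    · exact absurd hw (by simp)
  obtain ⟨r0, hr0⟩ : ∃ r, φ r ≠ 0 := by
    obtain ⟨a, b, hab⟩ := hφ.not_const
    by_contra h
    push Not at h
    exact hab (by rw [h, h])
  have hr0pos : r0 ≠ 0 := by rintro rfl; exact hr0 hφ.map_zero
  set T := t.toNNReal with hT
  have hTpos : T ≠ 0 := by rw [hT]; simpa using ht
  -- tau * φ(w / tau) ≥ (w / r0) * φ r0 if w / tau ≥ r0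
  obtain ⟨m, hm0, hm⟩ : ∃ m : ℝ≥0, m ≠ 0 ∧ (m : ℝ≥0∞) ≤ φ r0 := by
    rcases eq_or_ne (φ r0) ∞ with h | h
    · exact ⟨1, by simp, by simp [h]⟩
    · exact ⟨(φ r0).toNNReal, by simp [ENNReal.toNNReal_eq_zero_iff, hr0, h], by simp [h]⟩
  refine ⟨max (r0 * T : ℝ≥0) ((r0 / m : ℝ≥0) * M.toNNReal), by positivity, fun w hw => ?_⟩
  by_cases hwr : w ≤ r0 * T
  · exact le_max_of_le_left (by exact_mod_cast hwr)
  apply le_max_of_le_right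
  push Not at hwr
  have hw0 : w ≠ 0 := (lt_of_le_of_lt bot_le hwr).ne'
  unfold phit at hw
  rw [if_pos ht] at hw
  have hl : r0 * T / w ≤ 1 := div_le_one_of_le₀ hwr.le bot_le
  have hc := hφ.convex (w / T) 0 (r0 * T / w) (1 - r0 * T / w) (add_tsub_cancel_of_le hl)
  rw [hφ.map_zero, mul_zero, mul_zero, add_zero, add_zero] at hc
  have e : r0 * T / w * (w / T) = r0 := by field_simp
  rw [e] at hc
  have h3 : (m : ℝ≥0∞) ≤ ((r0 / w * M.toNNReal : ℝ≥0) : ℝ≥0∞) := by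
    refine hm.trans (hc.trans ?_)
    have e2 : r0 * T / w = (r0 / w) * T := by field_simp
    rw [e2, ENNReal.coe_mul, ENNReal.coe_mul, mul_assoc]
    gcongr
    exact hw
  rw [ENNReal.coe_le_coe] at h3
  norm_cast
  have : m * w ≤ r0 * M.toNNReal := by
    calc m * w ≤ (r0 / w * M.toNNReal) * w := by gcongr
      _ = _ := by field_simp
  rw [div_mul_eq_mul_div, le_div_iff₀ (pos_iff_ne_zero.2 hm0), mul_comm]
  exact this

lemma isC0_ext {d : ℕ} {f : Ed d → ℝ} (hf : IsC0 f) {ε : ℝ} (hε : 0 < ε) :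
    ∃ ρ : ℝ, ∀ x, ρ < ‖x‖ → |f x| < ε := by
  have h := hf.2
  rw [Metric.tendsto_nhds] at h
  have h1 := h ε hε
  rw [← Metric.cobounded_eq_cocompact, ← comap_norm_atTop, eventually_comap] at h1
  obtain ⟨ρ, hρ⟩ := (eventually_atTop.1 h1)
  exact ⟨ρ, fun x hx => by simpa using hρ _ hx.le x rfl⟩

lemma tail_bound {d : ℕ} {p : ℝ} (hp : 1 < p)
    {μ : Measure (Ed d)} (hμ : MemPp p μ) {f : Ed d → ℝ} (hf : IsC0 f) (R : ℝ) (hR : 0 ≤ R)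
    {ε : ℝ} (hε : 0 < ε) :
    ∃ ρ : ℝ, ∀ x, ρ < ‖x‖ → ∀ γ : Measure (Ed d × Ed d), γ.map Prod.fst = μ → cost p γ ≠ ∞ →
      ((cost p γ) ^ (1 / p)).toReal ≤ R → |∫ q, f (x + q.2) ∂γ| ≤ ε := by
  have hg := Good.of_isC0 hf
  obtain ⟨M, hM⟩ := hg.bdd
  have hM0 : 0 ≤ M := (abs_nonneg _).trans (hM 0)
  have := hμ.1
  set m := ((∫⁻ z, (‖z‖₊ : ℝ≥0∞) ^ p ∂μ) ^ (1 / p)).toReal with hm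
  have hm0 : 0 ≤ m := ENNReal.toReal_nonneg
  obtain ⟨ρ, hρ⟩ := isC0_ext hf (half_pos hε)
  set K := 2 * (M + 1) * (m + R + 1) / ε with hK
  have hKpos : 0 < K := by positivity
  refine ⟨ρ + K, fun x hx γ h1 h2 h3 => ?_⟩
  have := prob_of_fst h1
  obtain ⟨hi, hle⟩ := l1_le γ hp (h := fun q : Ed d × Ed d => q.2 - q.1) (by fun_prop) h2
  have hfin1 : ∫⁻ q : Ed d × Ed d, (‖q.1‖₊ : ℝ≥0∞) ^ p ∂γ = ∫⁻ z, (‖z‖₊ : ℝ≥0∞) ^ p ∂μ := by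
    rw [← h1, lintegral_map (by fun_prop) measurable_fst]
  obtain ⟨hi', hle'⟩ := l1_le γ hp (h := fun q : Ed d × Ed d => q.1) (by fun_prop)
    (by rw [hfin1]; exact hμ.2.ne)
  rw [hfin1] at hle'
  have hle2 : ∫ q, ‖q.2 - q.1‖ ∂γ ≤ R := hle.trans h3
  have hsum : ∫ q, (‖q.1‖ + ‖q.2 - q.1‖) ∂γ ≤ m + R := by
    rw [integral_add hi' hi]
    linarith
  have hpt : ∀ q : Ed d × Ed d, |f (x + q.2)| ≤ 0 + ε / 2 + M / K * (‖q.1‖ + ‖q.2 - q.1‖) := by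
    intro q
    have hy : ‖q.2‖ ≤ ‖q.1‖ + ‖q.2 - q.1‖ := by
      have := norm_add_le q.1 (q.2 - q.1)
      simpa using this
    by_cases hq : ‖q.2‖ < K
    · have : ρ < ‖x + q.2‖ := by
        have := norm_sub_le (x + q.2) q.2
        simp at this
        linarith
      have := hρ _ this
      have : 0 ≤ M / K * (‖q.1‖ + ‖q.2 - q.1‖) := by positivity
      linarith
    · push Not at hq
      have : M ≤ M / K * (‖q.1‖ + ‖q.2 - q.1‖) := by
        rw [div_mul_eq_mul_div, le_div_iff₀ hKpos]
        gcongr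
        linarith
      have := hM (x + q.2)
      linarith
  have hfi := hg.integrable γ (u := fun q => x + q.2) (by fun_prop)
  have h5 := integral_le_aff γ hfi.abs (integrable_const 0) (hi'.add hi) hpt
  have h6 : M / K * ∫ q, (‖q.1‖ + ‖q.2 - q.1‖) ∂γ ≤ ε / 2 := by
    calc _ ≤ M / K * (m + R) := by gcongr
      _ ≤ (M + 1) / K * (m + R + 1) := by
          apply mul_le_mul _ (by linarith) (by positivity) (by positivity)
          gcongr; linarith
      _ = ε / 2 := by rw [hK]; field_simp
  refine abs_integral_le_integral_abs.trans (h5.trans ?_)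
  simp only [integral_zero, zero_add]
  calc _ ≤ ε / 2 + ε / 2 := by gcongr; exact h6
    _ = ε := by ring

lemma Sop_isC0 {d : ℕ} {p : ℝ} (hp : 1 < p) {φ : ℝ≥0 → ℝ≥0∞} (hφ : IsPenalty p φ)
    {μ : Measure (Ed d)} (hμ : MemPp p μ) {t : ℝ} {f : Ed d → ℝ} (hf : IsC0 f) :
    IsC0 (Sop p φ μ t f) := by
  have hg := Good.of_isC0 hf
  refine ⟨(Sop_good hp hφ hμ hg).continuous, ?_⟩
  obtain ⟨M, hM⟩ := hg.bdd
  have := hμ.1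
  rw [Metric.tendsto_nhds]
  intro ε hε
  obtain ⟨R, hR, hcoer⟩ := phit_coercive hφ t M
  obtain ⟨ρ, hρ⟩ := tail_bound hp hμ hf R hR (half_pos hε)
  rw [← Metric.cobounded_eq_cocompact, ← comap_norm_atTop, eventually_comap]
  filter_upwards [eventually_gt_atTop ρ] with a ha x hx
  subst hx
  have hlow : -(ε / 2) ≤ Sop p φ μ t f x := by
    have hd := adm_diag hp hφ μ t
    have h1 := le_Sop_of_adm hp hφ hμ hg hd x
    have h2 := hρ x ha _ hd.fst hd.fin (hcoer _ (hd.pen.trans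
      (ENNReal.ofReal_le_ofReal ((abs_nonneg _).trans (hM 0)))))
    have := abs_le.1 h2
    linarith
  have hup : Sop p φ μ t f x ≤ ε / 2 := by
    refine le_of_forall_lt fun r hr => ?_
    obtain ⟨γ, c, hadm, hr⟩ := exists_adm hp hφ hμ hg hr
    have := prob_of_fst hadm.fst
    by_cases hc : c ≤ M
    · have h2 := hρ x ha _ hadm.fst hadm.fin (hcoer _ (hadm.pen.trans
        (ENNReal.ofReal_le_ofReal hc)))
      have := abs_le.1 h2
      have := hadm.nonneg
      linarith
    · have h2 := integral_le_aff γ (F := fun q => f (x + q.2)) (G := fun q => 0)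
        (H := fun _ => 0) (a := M) (b := 0) (hg.integrable γ (by fun_prop))
        (by simp) (by simp) (fun q => by simpa using (abs_le.1 (hM (x + q.2))).2)
      simp at h2
      linarith
  rw [Real.dist_eq, sub_zero]
  exact lt_of_le_of_lt (abs_le.2 ⟨hlow, hup⟩) (by linarith)

/-- epigraph of `a ↦ φ_t(a^{1/p})` -/
def epi (p : ℝ) (φ : ℝ≥0 → ℝ≥0∞) (t : ℝ) : Set (ℝ × ℝ) :=
  {v | 0 ≤ v.1 ∧ 0 ≤ v.2 ∧ phit φ t (v.1.toNNReal ^ (1 / p)) ≤ ENNReal.ofReal v.2}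

lemma phit_pos {φ : ℝ≥0 → ℝ≥0∞} {t : ℝ} (ht : 0 < t) (r : ℝ≥0) :
    phit φ t r = (t.toNNReal : ℝ≥0∞) * φ (r / t.toNNReal) := by
  unfold phit; rw [if_pos ht]

lemma epi_closed {p : ℝ} (hp : 1 < p) {φ : ℝ≥0 → ℝ≥0∞} (hφ : IsPenalty p φ) {t : ℝ}
    (ht : 0 < t) : IsClosed (epi p φ t) := by
  have h1 := hφ.lsc.isClosed_epigraph
  have hT : t.toNNReal ≠ 0 := by simpa using ht
  have hc : Continuous fun v : ℝ × ℝ =>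
      ((v.1.toNNReal ^ (1 / p) / t.toNNReal : ℝ≥0), ENNReal.ofReal (v.2 / t)) := by
    refine Continuous.prodMk ?_ ?_
    · refine Continuous.div_const ?_ _
      exact (NNReal.continuous_rpow_const (by positivity)).comp
        (continuous_real_toNNReal.comp continuous_fst)
    · exact ENNReal.continuous_ofReal.comp (by fun_prop)
  have h2 := (isClosed_le (continuous_const (y := (0:ℝ))) continuous_fst).inter
    ((isClosed_le (continuous_const (y := (0:ℝ))) continuous_snd).inter (h1.preimage hc))
  convert h2 using 1
  ext v
  simp only [epi, mem_setOf_eq, mem_inter_iff, mem_preimage]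
  rw [phit_pos ht, ENNReal.ofReal_div_of_pos ht, mul_comm, ENNReal.le_div_iff_mul_le]
  · rfl
  · left; simpa using ht
  · left; simp

lemma epi_convex {p : ℝ} (hp : 1 < p) {φ : ℝ≥0 → ℝ≥0∞} (hφ : IsPenalty p φ) {t : ℝ}
    (ht : 0 < t) : Convex ℝ (epi p φ t) := by
  rintro ⟨a, c⟩ ⟨ha, hc, hac⟩ ⟨b, e⟩ ⟨hb, he, hbe⟩ l m hl hm hlm
  simp only at ha hc hac hb he hbe
  refine ⟨by simp; positivity, by simp; positivity, ?_⟩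
  lift a to ℝ≥0 using ha
  lift b to ℝ≥0 using hb
  lift c to ℝ≥0 using hc
  lift e to ℝ≥0 using he
  lift l to ℝ≥0 using hl
  lift m to ℝ≥0 using hm
  simp only [Prod.smul_mk, Prod.mk_add_mk, smul_eq_mul]
  norm_cast at hlm ⊢
  simp only [Real.toNNReal_coe, ENNReal.ofReal_coe_nnreal] at hac hbe ⊢
  rw [phit_pos ht] at hac hbe ⊢
  set T := t.toNNReal with hT
  have hT0 : T ≠ 0 := by simpa [hT] using ht
  have key : ∀ r : ℝ≥0, r ^ (1 / p) / T = (r / T ^ p) ^ (1 / p) := by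
    intro r
    rw [NNReal.div_rpow, ← NNReal.rpow_mul, mul_one_div_cancel (by linarith), NNReal.rpow_one]
  rw [key] at hac hbe ⊢
  have h := hφ.convex_rpow (a / T ^ p) (b / T ^ p) l m hlm
  have e1 : (l * a + m * b) / T ^ p = l * (a / T ^ p) + m * (b / T ^ p) := by
    rw [add_div, mul_div_assoc, mul_div_assoc]
  rw [e1]
  calc (T : ℝ≥0∞) * φ ((l * (a / T ^ p) + m * (b / T ^ p)) ^ (1 / p))
      ≤ T * (l * φ ((a / T ^ p) ^ (1 / p)) + m * φ ((b / T ^ p) ^ (1 / p))) := by gcongr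
    _ = l * (T * φ ((a / T ^ p) ^ (1 / p))) + m * (T * φ ((b / T ^ p) ^ (1 / p))) := by ring
    _ ≤ l * c + m * e := by gcongr
    _ = _ := by push_cast; rfl

lemma phit_add {p : ℝ} {φ : ℝ≥0 → ℝ≥0∞} (hφ : IsPenalty p φ) {s t : ℝ}
    (hs : 0 < s) (ht : 0 < t) (a b : ℝ≥0) :
    phit φ (s + t) (a + b) ≤ phit φ s a + phit φ t b := by
  rw [phit_pos hs, phit_pos ht, phit_pos (add_pos hs ht), Real.toNNReal_add hs.le ht.le]
  set T := t.toNNReal with hT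
  have hT0 : T ≠ 0 := by simpa [hT] using ht
  set S := s.toNNReal with hS
  have hS0 : S ≠ 0 := by simpa [hS] using hs
  have hST : S + T ≠ 0 := by simp [hS0]
  have h := hφ.convex (a / S) (b / T) (S / (S + T)) (T / (S + T)) (by field_simp)
  have e : S / (S + T) * (a / S) + T / (S + T) * (b / T) = (a + b) / (S + T) := by
    field_simp
  rw [e] at h
  calc ((S + T : ℝ≥0) : ℝ≥0∞) * φ ((a + b) / (S + T))
      ≤ ((S + T : ℝ≥0) : ℝ≥0∞) * (((S / (S + T) : ℝ≥0) : ℝ≥0∞) * φ (a / S)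
          + ((T / (S + T) : ℝ≥0) : ℝ≥0∞) * φ (b / T)) := by gcongr
    _ = (((S + T) * (S / (S + T)) : ℝ≥0) : ℝ≥0∞) * φ (a / S)
          + (((S + T) * (T / (S + T)) : ℝ≥0) : ℝ≥0∞) * φ (b / T) := by
        rw [mul_add, ENNReal.coe_mul, ENNReal.coe_mul, mul_assoc, mul_assoc]
    _ = _ := by
        rw [mul_div_cancel₀ _ hST, mul_div_cancel₀ _ hST]

lemma Sop_sub_pos {d : ℕ} {p : ℝ} (hp : 1 < p) {φ : ℝ≥0 → ℝ≥0∞} (hφ : IsPenalty p φ)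
    {μs μt : Measure (Ed d)} (hμs : MemPp p μs) (hμt : MemPp p μt)
    (hμst : MemPp p (μs.conv μt)) {s t : ℝ} (hs : 0 < s) (ht : 0 < t)
    {f : Ed d → ℝ} (hf : Good f) (x : Ed d) :
    Sop p φ μs s (Sop p φ μt t f) x ≤ Sop p φ (μs.conv μt) (s + t) f x := by
  set g := Sop p φ μt t f with hg
  have hgG : Good g := Sop_good hp hφ hμt hf
  refine le_of_forall_lt fun r hr => ?_
  obtain ⟨γ, c, hadm, hr⟩ := exists_adm hp hφ hμs hgG hr
  have := hμs.1
  have := hμt.1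
  have := prob_of_fst hadm.fst
  set ε := (∫ q, g (x + q.2) ∂γ - c - r) / 8 with hε
  have hεpos : 0 < ε := by rw [hε]; linarith
  have hsel : ∀ u : Ed d, ∃ Γc : Measure (Ed d × Ed d) × ℝ, Adm p φ μt t Γc.1 Γc.2 ∧
      g u - ε < ∫ q, f (u + q.2) ∂Γc.1 - Γc.2 := fun u => by
    obtain ⟨G, e, h1, h2⟩ := exists_adm hp hφ hμt hf (x := u) (r := g u - ε) (t := t)
      (by rw [hg]; linarith)
    exact ⟨(G, e), h1, h2⟩
  choose Γc hΓadm hΓval using hsel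
  set Γ := fun u => (Γc u).1 with hΓ
  set cc := fun u => (Γc u).2 with hcc
  have hΓprob : ∀ u, IsProbabilityMeasure (Γ u) := fun u => prob_of_fst (hΓadm u).fst
  obtain ⟨C, hC, hal⟩ := hf.al ε hεpos
  have halg : ∀ a b, g a ≤ g b + ε + C * ‖a - b‖ := Sop_al hp hφ hμt hf hal
  -- the simple approximation
  have hint2 : Integrable (fun q : Ed d × Ed d => q.2) γ := by
    have hm := memPp_snd hp hμs hadm.fst hadm.fin
    have h3 : ∫⁻ q : Ed d × Ed d, (‖q.2‖₊ : ℝ≥0∞) ^ p ∂γ ≠ ∞ := by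
      have := hm.2.ne
      rwa [lintegral_map (by fun_prop) measurable_snd] at this
    have := (l1_le γ hp (h := fun q : Ed d × Ed d => q.2) (by fun_prop) h3).1
    exact (integrable_norm_iff (by fun_prop)).1 this
  have hvm : Measurable (fun q : Ed d × Ed d => x + q.2) := by fun_prop
  have happ : ∃ π : SimpleFunc (Ed d × Ed d) (Ed d),
      Integrable (fun q => ‖(x + q.2) - π q‖) γ ∧
      ∫ q, ‖(x + q.2) - π q‖ ∂γ ≤ ε / (C + 1) := by
    have hlim := SimpleFunc.tendsto_approxOn_L1_enorm (μ := γ) hvm (s := univ) (y₀ := 0)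
      (mem_univ _) (by simp) (by simp only [sub_zero]; exact ((integrable_const x).add hint2).2)
    have hev := hlim.eventually (gt_mem_nhds (show (0 : ℝ≥0∞) < ENNReal.ofReal (ε / (C + 1)) by
      rw [ENNReal.ofReal_pos]; positivity))
    obtain ⟨n, hn⟩ := hev.exists
    refine ⟨SimpleFunc.approxOn (fun q : Ed d × Ed d => x + q.2) hvm univ 0 (mem_univ _) n, ?_, ?_⟩
    all_goals
      set π := SimpleFunc.approxOn (fun q : Ed d × Ed d => x + q.2) hvm univ 0 (mem_univ _) n
      have hm : Measurable fun q => (x + q.2) - π q := hvm.sub π.measurable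
      have hn' : ∫⁻ q, ‖(x + q.2) - π q‖ₑ ∂γ < ENNReal.ofReal (ε / (C + 1)) := by
        refine lt_of_le_of_lt (le_of_eq ?_) hn
        refine lintegral_congr fun q => ?_
        rw [← enorm_neg, neg_sub]
    · exact Integrable.norm ⟨hm.aestronglyMeasurable, hn'.trans ENNReal.ofReal_lt_top⟩
    · rw [integral_norm_eq_lintegral_enorm hm.aestronglyMeasurable]
      exact ENNReal.toReal_le_of_le_ofReal (by positivity) hn'.le
  obtain ⟨π, hπi, hπ⟩ := happ
  let κ : ProbabilityTheory.Kernel (Ed d × Ed d) (Ed d × Ed d) :=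
    ⟨fun q => Γ (π q), (π.map Γ).measurable⟩
  have hκ : ∀ q, κ q = Γ (π q) := fun q => rfl
  have hκM : ProbabilityTheory.IsMarkovKernel κ := ⟨fun q => hΓprob (π q)⟩
  set Θ := γ.compProd κ with hΘ
  set T : (Ed d × Ed d) × (Ed d × Ed d) → Ed d × Ed d :=
    fun w => (w.1.1 + w.2.1, w.1.2 + w.2.2) with hT
  have hTm : Measurable T := by fun_prop
  -- total costs
  set A := fun u => (cost p (Γ u)).toReal with hA
  set Abar := ∫ q, A (π q) ∂γ with hAbar
  set cbar := ∫ q, cc (π q) ∂γ with hcbar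
  have hAi : Integrable (fun q => A (π q)) γ := (π.map A).integrable_of_isFiniteMeasure
  have hci : Integrable (fun q => cc (π q)) γ := (π.map cc).integrable_of_isFiniteMeasure
  have hepi : (Abar, cbar) ∈ epi p φ t := by
    have h1 := (epi_convex hp hφ ht).integral_mem (epi_closed hp hφ ht) (μ := γ)
      (f := fun q => (A (π q), cc (π q))) (Eventually.of_forall fun q => ?_) (hAi.prodMk hci)
    · rwa [integral_pair hAi hci] at h1
    · refine ⟨ENNReal.toReal_nonneg, (hΓadm _).nonneg, ?_⟩
      have := (hΓadm (π q)).pen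
      rw [ENNReal.toNNReal_rpow] at this
      simpa only [hA, ENNReal.toReal, Real.toNNReal_coe] using this
  have hB : ∫⁻ w, (‖w.2.2 - w.2.1‖₊ : ℝ≥0∞) ^ p ∂Θ = ENNReal.ofReal Abar := by
    rw [hΘ, Measure.lintegral_compProd (by fun_prop), hAbar,
      ofReal_integral_eq_lintegral_ofReal hAi (Eventually.of_forall fun q => ENNReal.toReal_nonneg)]
    refine lintegral_congr fun q => ?_
    rw [hA, ENNReal.ofReal_toReal (hΓadm (π q)).fin]
    rfl
  have hA1 : ∫⁻ w, (‖w.1.2 - w.1.1‖₊ : ℝ≥0∞) ^ p ∂Θ = cost p γ := by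
    rw [hΘ, Measure.lintegral_compProd (by fun_prop)]
    simp [cost]
  have hcostle : (cost p (Θ.map T)) ^ (1 / p) ≤
      (cost p γ) ^ (1 / p) + (ENNReal.ofReal Abar) ^ (1 / p) := by
    rw [← hB, ← hA1]
    refine le_trans ?_ (ENNReal.lintegral_Lp_add_le (by fun_prop) (by fun_prop) hp.le)
    unfold cost
    rw [lintegral_map (by fun_prop) hTm]
    refine ENNReal.rpow_le_rpow (lintegral_mono fun w => ENNReal.rpow_le_rpow ?_ (by linarith))
      (by positivity)
    simp only [Pi.add_apply, hT]
    norm_cast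
    refine le_trans (le_of_eq ?_) (nnnorm_add_le _ _)
    congr 1
    abel
  have hfa : (cost p γ) ^ (1 / p) ≠ ∞ :=
    ENNReal.rpow_ne_top_of_nonneg (by positivity) hadm.fin
  have hfb : (ENNReal.ofReal Abar) ^ (1 / p) ≠ ∞ :=
    ENNReal.rpow_ne_top_of_nonneg (by positivity) ENNReal.ofReal_ne_top
  have hAdm : Adm p φ (μs.conv μt) (s + t) (Θ.map T) (c + cbar) := by
    refine ⟨?_, ?_, add_nonneg hadm.nonneg hepi.2.1, ?_⟩
    · rw [Measure.map_map measurable_fst hTm]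
      refine Measure.ext_of_lintegral _ fun h hh => ?_
      rw [lintegral_map hh (by fun_prop), hΘ, Measure.lintegral_compProd (by fun_prop),
        Measure.lintegral_conv hh, ← hadm.fst, lintegral_map (by fun_prop) measurable_fst]
      refine lintegral_congr fun q => ?_
      rw [hκ, ← (hΓadm (π q)).fst, lintegral_map (by fun_prop) measurable_fst]
      rfl
    · intro h
      rw [h, ENNReal.top_rpow_of_pos (by positivity)] at hcostle
      exact absurd (top_le_iff.1 hcostle) (ENNReal.add_ne_top.2 ⟨hfa, hfb⟩)
    · calc phit φ (s + t) ((cost p (Θ.map T)) ^ (1 / p)).toNNReal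
          ≤ phit φ (s + t) (((cost p γ) ^ (1 / p)).toNNReal
              + ((ENNReal.ofReal Abar) ^ (1 / p)).toNNReal) := by
            refine phit_mono hφ _ ?_
            rw [← ENNReal.toNNReal_add hfa hfb]
            exact ENNReal.toNNReal_mono (ENNReal.add_ne_top.2 ⟨hfa, hfb⟩) hcostle
        _ ≤ _ := phit_add hφ hs ht _ _
        _ ≤ ENNReal.ofReal c + ENNReal.ofReal cbar := by
            refine add_le_add hadm.pen ?_
            have := hepi.2.2
            rw [ENNReal.toNNReal_rpow]
            exact this
        _ = _ := (ENNReal.ofReal_add hadm.nonneg hepi.2.1).symm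
  refine lt_of_lt_of_le ?_ (le_Sop_of_adm hp hφ hμst hf hAdm x)
  have e0 : ∫ q, f (x + q.2) ∂(Θ.map T) = ∫ w, f (x + (T w).2) ∂Θ := by
    rw [integral_map hTm.aemeasurable]
    exact (hf.continuous.comp (by fun_prop)).aestronglyMeasurable
  rw [e0]
  have hΘi : Integrable (fun w => f (x + (T w).2)) Θ := hf.integrable Θ (by fun_prop)
  have hinner : Integrable (fun q => ∫ b, f (x + (T (q, b)).2) ∂(κ q)) γ := by
    have h := hΘi
    rw [hΘ, Measure.compProd] at h
    simpa using h.integral_compProd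
  rw [hΘ, Measure.integral_compProd hΘi]
  have hpt : ∀ q, g (x + q.2) ≤ (∫ b, f (x + (T (q, b)).2) ∂(κ q) - cc (π q)) + 3 * ε
      + (2 * C) * ‖(x + q.2) - π q‖ := by
    intro q
    have h1 := halg (x + q.2) (π q)
    have h2 := hΓval (π q)
    have := hΓprob (π q)
    have h3 := integral_le_aff (Γ (π q)) (F := fun b => f (π q + b.2))
      (G := fun b => f (x + (T (q, b)).2)) (H := fun _ => 0) (b := 0)
      (a := ε + C * ‖(x + q.2) - π q‖)
      (hf.integrable _ (by fun_prop)) (hf.integrable _ (by fun_prop)) (by simp) (fun b => by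
        have := hal (π q + b.2) (x + (T (q, b)).2)
        have e : π q + b.2 - (x + (T (q, b)).2) = -((x + q.2) - π q) := by
          simp only [hT]; abel
        rw [e, norm_neg] at this
        simp only [mul_zero, add_zero]
        linarith)
    simp only [zero_mul, add_zero] at h3
    rw [hκ]
    have h2' : g (π q) - ε < ∫ b, f (π q + b.2) ∂(Γ (π q)) - cc (π q) := h2
    linarith
  have hfinal := integral_le_aff γ (hgG.integrable γ (by fun_prop)) (hinner.sub hci) hπi hpt
  have e : ∫ q, ((fun q => ∫ b, f (x + (T (q, b)).2) ∂(κ q)) - fun q => cc (π q)) q ∂γ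
      = ∫ q, ∫ b, f (x + (T (q, b)).2) ∂(κ q) ∂γ - cbar := integral_sub hinner hci
  rw [e] at hfinal
  have hCb : C * ∫ q, ‖(x + q.2) - π q‖ ∂γ ≤ ε := by
    calc C * ∫ q, ‖(x + q.2) - π q‖ ∂γ ≤ (C + 1) * (ε / (C + 1)) := by
          apply mul_le_mul (by linarith) hπ (integral_nonneg fun q => norm_nonneg _) (by linarith)
      _ = ε := by field_simp
  linarith

lemma Sop_sub {d : ℕ} {p : ℝ} (hp : 1 < p) {φ : ℝ≥0 → ℝ≥0∞} (hφ : IsPenalty p φ)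
    {μ : ℝ → Measure (Ed d)} (hμ : IsConvSemigroup p μ) {s t : ℝ} (hs : 0 < s) (ht : 0 ≤ t)
    {f : Ed d → ℝ} (hf : Good f) (x : Ed d) :
    Sop p φ (μ s) s (Sop p φ (μ t) t f) x ≤ Sop p φ (μ (s + t)) (s + t) f x := by
  rcases ht.eq_or_lt with rfl | ht
  · rw [add_zero]
    have := Sop_le_shift (t := s) hp hφ (hμ.2.2 s hs.le)
      (Sop_good hp hφ (t := 0) (hμ.2.2 0 le_rfl) hf) hf (x := x) (x' := x) (K := 0) (fun y => by
        simpa using Sop_zero_le hp hφ (hμ.2.2 0 le_rfl) hμ.1 hf (x + y))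
    simpa using this
  · have h := hμ.2.2 (s + t) (by positivity)
    rw [hμ.2.1 s t hs.le ht.le] at h ⊢
    exact Sop_sub_pos hp hφ (hμ.2.2 s hs.le) (hμ.2.2 t ht.le) h hs ht hf x

/-- The properties shared by the one-step operators and their compositions. -/
structure Nice {d : ℕ} (T : (Ed d → ℝ) → Ed d → ℝ) : Prop where
  good : ∀ f, Good f → Good (T f)
  shift : ∀ f g, Good f → Good g → ∀ x x' K, (∀ y, f (x + y) ≤ g (x' + y) + K) →
    T f x ≤ T g x' + K
  zero : T (fun _ => 0) = fun _ => 0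
  conv : ∀ f g, Good f → Good g → ∀ l : ℝ, 0 ≤ l → l ≤ 1 → ∀ x,
    T (fun y => l * f y + (1 - l) * g y) x ≤ l * T f x + (1 - l) * T g x
  c0 : ∀ f, IsC0 f → IsC0 (T f)

lemma Nice.mono {d : ℕ} {T : (Ed d → ℝ) → Ed d → ℝ} (hT : Nice T) {f g : Ed d → ℝ}
    (hf : Good f) (hg : Good g) {K : ℝ} (h : ∀ y, f y ≤ g y + K) (x : Ed d) :
    T f x ≤ T g x + K := hT.shift f g hf hg x x K fun y => h _

lemma Nice.mono0 {d : ℕ} {T : (Ed d → ℝ) → Ed d → ℝ} (hT : Nice T) {f g : Ed d → ℝ}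
    (hf : Good f) (hg : Good g) (h : ∀ y, f y ≤ g y) (x : Ed d) :
    T f x ≤ T g x := by
  simpa using hT.mono hf hg (K := 0) (by simpa using h) x

lemma Nice.lower {d : ℕ} {T : (Ed d → ℝ) → Ed d → ℝ} (hT : Nice T) {f : Ed d → ℝ}
    (hf : Good f) {M : ℝ} (hM : ∀ x, |f x| ≤ M) (x : Ed d) : -M ≤ T f x := by
  have h := hT.mono (Good.const 0) hf (K := M) (fun y => by
    have := (abs_le.1 (hM y)).1; linarith) x
  rw [hT.zero] at h
  simp only at h
  linarith

lemma Nice.upper {d : ℕ} {T : (Ed d → ℝ) → Ed d → ℝ} (hT : Nice T) {f : Ed d → ℝ}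
    (hf : Good f) {M : ℝ} (hM : ∀ x, |f x| ≤ M) (x : Ed d) : T f x ≤ M := by
  have h := hT.mono hf (Good.const 0) (K := M) (fun y => by
    have := (abs_le.1 (hM y)).2; linarith) x
  rw [hT.zero] at h
  simpa using h

lemma Nice.al {d : ℕ} {T : (Ed d → ℝ) → Ed d → ℝ} (hT : Nice T) {f : Ed d → ℝ}
    (hf : Good f) {ε C : ℝ} (h : ∀ a b, f a ≤ f b + ε + C * ‖a - b‖) (a b : Ed d) :
    T f a ≤ T f b + ε + C * ‖a - b‖ := by
  have := hT.shift f f hf hf a b (ε + C * ‖a - b‖)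
    (fun y => by have := h (a + y) (b + y); simp at this; linarith)
  linarith

lemma Nice.id {d : ℕ} : Nice (fun f : Ed d → ℝ => f) where
  good f hf := hf
  shift f g _ _ x x' K h := by simpa using h 0
  zero := rfl
  conv f g _ _ l _ _ x := le_rfl
  c0 f hf := hf

lemma Nice.comp {d : ℕ} {T U : (Ed d → ℝ) → Ed d → ℝ} (hT : Nice T) (hU : Nice U) :
    Nice (fun f => T (U f)) where
  good f hf := hT.good _ (hU.good _ hf)
  shift f g hf hg x x' K h := by
    refine hT.shift _ _ (hU.good _ hf) (hU.good _ hg) x x' K fun y => ?_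
    refine hU.shift f g hf hg _ _ _ fun z => ?_
    rw [add_assoc, add_assoc]
    exact h _
  zero := by rw [hU.zero, hT.zero]
  conv f g hf hg l h0 h1 x := by
    refine le_trans ?_ (hT.conv _ _ (hU.good _ hf) (hU.good _ hg) l h0 h1 x)
    exact hT.mono0 (hU.good _ (hf.comb hg h0 h1))
      ((hU.good _ hf).comb (hU.good _ hg) h0 h1) (hU.conv f g hf hg l h0 h1) x
  c0 f hf := hT.c0 _ (hU.c0 _ hf)

lemma Nice.iter {d : ℕ} {T : (Ed d → ℝ) → Ed d → ℝ} (hT : Nice T) (k : ℕ) : Nice (T^[k]) := by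
  induction k with
  | zero => exact Nice.id
  | succ k ih =>
    rw [Function.iterate_succ']
    exact hT.comp ih

lemma Sop_nice {d : ℕ} {p : ℝ} (hp : 1 < p) {φ : ℝ≥0 → ℝ≥0∞} (hφ : IsPenalty p φ)
    {μ : Measure (Ed d)} (hμ : MemPp p μ) (t : ℝ) : Nice (fun f => Sop p φ μ t f) where
  good f hf := Sop_good hp hφ hμ hf
  shift f g hf hg x x' K h := Sop_le_shift hp hφ hμ hf hg h
  zero := funext fun x => Sop_const_zero hp hφ hμ t x
  conv f g hf hg l h0 h1 x := Sop_convex hp hφ hμ hf hg h0 h1 x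
  c0 f hf := Sop_isC0 hp hφ hμ hf

lemma rem_nonneg {t : ℝ} (ht : 0 ≤ t) (n : ℕ) : 0 ≤ t - ⌊(2:ℝ)^n * t⌋₊ * ((2:ℝ)^n)⁻¹ := by
  have h : (0:ℝ) < 2 ^ n := by positivity
  have h1 := Nat.floor_le (show 0 ≤ (2:ℝ) ^ n * t by positivity)
  rw [sub_nonneg, ← div_eq_mul_inv, div_le_iff₀ h]
  linarith

lemma SiterN_nice {d : ℕ} {p : ℝ} (hp : 1 < p) {φ : ℝ≥0 → ℝ≥0∞} (hφ : IsPenalty p φ)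
    {μ : ℝ → Measure (Ed d)} (hμ : IsConvSemigroup p μ) {t : ℝ} (ht : 0 ≤ t) (n : ℕ) :
    Nice (fun f => SiterN p φ μ n t f) := by
  have h1 := Sop_nice hp hφ (hμ.2.2 ((2 : ℝ) ^ n)⁻¹ (by positivity)) ((2 : ℝ) ^ n)⁻¹
  have h2 := Sop_nice hp hφ (hμ.2.2 _ (rem_nonneg ht n)) (t - ⌊(2:ℝ)^n * t⌋₊ * ((2:ℝ)^n)⁻¹)
  exact (h1.iter ⌊(2:ℝ)^n * t⌋₊).comp h2

lemma iter_double_le {d : ℕ} {T U : (Ed d → ℝ) → Ed d → ℝ} (hT : Nice T) (hU : Nice U)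
    (h : ∀ f, Good f → ∀ x, U (U f) x ≤ T f x) (k : ℕ) {f g : Ed d → ℝ} (hf : Good f)
    (hg : Good g) (hfg : ∀ x, f x ≤ g x) (x : Ed d) : U^[2 * k] f x ≤ T^[k] g x := by
  induction k generalizing x with
  | zero => simpa using hfg x
  | succ k ih =>
    rw [show 2 * (k + 1) = (2 * k) + 1 + 1 by ring, Function.iterate_succ_apply',
      Function.iterate_succ_apply', Function.iterate_succ_apply']
    have hG := (hU.iter (2 * k)).good f hf
    exact (h _ hG x).trans (hT.mono0 hG ((hT.iter k).good g hg) ih x)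

lemma SiterN_anti {d : ℕ} {p : ℝ} (hp : 1 < p) {φ : ℝ≥0 → ℝ≥0∞} (hφ : IsPenalty p φ)
    {μ : ℝ → Measure (Ed d)} (hμ : IsConvSemigroup p μ) {t : ℝ} (ht : 0 ≤ t)
    {f : Ed d → ℝ} (hf : Good f) (x : Ed d) : Antitone fun n => SiterN p φ μ n t f x := by
  refine antitone_nat_of_succ_le fun n => ?_
  unfold SiterN
  have hr := rem_nonneg ht n
  have hr' := rem_nonneg ht (n + 1)
  set k := ⌊(2:ℝ)^n * t⌋₊ with hk
  set k' := ⌊(2:ℝ)^(n+1) * t⌋₊ with hk'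
  have hpos : (0:ℝ) < 2 ^ n := by positivity
  set h := ((2:ℝ)^n)⁻¹ with hh
  set h' := ((2:ℝ)^(n+1))⁻¹ with hh'
  have hhh : h = h' + h' := by
    rw [hh, hh', pow_succ, mul_inv]; ring
  have hh'pos : 0 < h' := by positivity
  have hhpos : 0 < h := by positivity
  have hT := Sop_nice hp hφ (hμ.2.2 h hhpos.le) h
  have hU := Sop_nice hp hφ (hμ.2.2 h' hh'pos.le) h'
  have hUT : ∀ f, Good f → ∀ x, Sop p φ (μ h') h' (Sop p φ (μ h') h' f) x ≤ Sop p φ (μ h) h f x := by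
    intro f hf x
    rw [hhh]
    exact Sop_sub hp hφ hμ hh'pos hh'pos.le hf x
  have hcase : k' = 2 * k ∨ k' = 2 * k + 1 := by
    have a1 := Nat.floor_le (show 0 ≤ (2:ℝ) ^ n * t by positivity)
    have a2 := Nat.lt_floor_add_one ((2:ℝ) ^ n * t)
    rw [← hk] at a1 a2
    have b1 : 2 * k ≤ k' := by
      apply Nat.le_floor
      push_cast; rw [pow_succ]; linarith
    have b2 : k' < 2 * k + 2 := by
      rw [hk', Nat.floor_lt (by positivity)]
      push_cast; rw [pow_succ]; linarith
    omega
  have hRT := Sop_nice hp hφ (hμ.2.2 _ hr) (t - k * h)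
  rcases hcase with hc | hc
  · have e : t - (k' : ℝ) * h' = t - k * h := by rw [hc, hhh]; push_cast; ring
    rw [e, hc]
    exact iter_double_le hT hU hUT k (hRT.good f hf) (hRT.good f hf) (fun _ => le_rfl) x
  · have e : t - (k : ℝ) * h = h' + (t - k' * h') := by rw [hc, hhh]; push_cast; ring
    rw [hc, Function.iterate_succ_apply, ← hc]
    have hR' := Sop_nice hp hφ (hμ.2.2 _ hr') (t - k' * h')
    refine iter_double_le hT hU hUT k (hU.good _ (hR'.good f hf)) (hRT.good f hf) (fun y => ?_) x
    rw [e]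
    exact Sop_sub hp hφ hμ hh'pos hr' hf y

lemma Slim_tendsto {d : ℕ} {p : ℝ} (hp : 1 < p) {φ : ℝ≥0 → ℝ≥0∞} (hφ : IsPenalty p φ)
    {μ : ℝ → Measure (Ed d)} (hμ : IsConvSemigroup p μ) {t : ℝ} (ht : 0 ≤ t)
    {f : Ed d → ℝ} (hf : Good f) (x : Ed d) :
    Tendsto (fun n => SiterN p φ μ n t f x) atTop (𝓝 (Slim p φ μ t f x)) := by
  obtain ⟨M, hM⟩ := hf.bdd
  refine tendsto_atTop_ciInf (SiterN_anti hp hφ hμ ht hf x) ⟨-M, ?_⟩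
  rintro _ ⟨n, rfl⟩
  exact (SiterN_nice hp hφ hμ ht n).lower hf hM x

lemma Slim_good {d : ℕ} {p : ℝ} (hp : 1 < p) {φ : ℝ≥0 → ℝ≥0∞} (hφ : IsPenalty p φ)
    {μ : ℝ → Measure (Ed d)} (hμ : IsConvSemigroup p μ) {t : ℝ} (ht : 0 ≤ t)
    {f : Ed d → ℝ} (hf : Good f) : Good (Slim p φ μ t f) := by
  obtain ⟨M, hM⟩ := hf.bdd
  refine ⟨⟨M, fun x => abs_le.2 ⟨?_, ?_⟩⟩, fun ε hε => ?_⟩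
  · exact ge_of_tendsto' (Slim_tendsto hp hφ hμ ht hf x)
      fun n => (SiterN_nice hp hφ hμ ht n).lower hf hM x
  · exact le_of_tendsto' (Slim_tendsto hp hφ hμ ht hf x)
      fun n => (SiterN_nice hp hφ hμ ht n).upper hf hM x
  · obtain ⟨C, hC, h⟩ := hf.al ε hε
    refine ⟨C, hC, fun a b => ?_⟩
    exact le_of_tendsto_of_tendsto' (Slim_tendsto hp hφ hμ ht hf a)
      (((Slim_tendsto hp hφ hμ ht hf b).add_const ε).add_const _)
      fun n => (SiterN_nice hp hφ hμ ht n).al hf h a b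

lemma Good.neg {d : ℕ} {f : Ed d → ℝ} (hf : Good f) : Good (fun x => - f x) := by
  obtain ⟨M, hM⟩ := hf.bdd
  refine ⟨⟨M, fun x => by simpa using hM x⟩, fun ε hε => ?_⟩
  obtain ⟨C, hC, h⟩ := hf.al ε hε
  refine ⟨C, hC, fun a b => ?_⟩
  have := h b a
  rw [norm_sub_rev] at this
  linarith

lemma Nice.neg_le {d : ℕ} {T : (Ed d → ℝ) → Ed d → ℝ} (hT : Nice T) {f : Ed d → ℝ}
    (hf : Good f) (x : Ed d) : - T (fun y => - f y) x ≤ T f x := by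
  have h := hT.conv f _ hf hf.neg (1 / 2) (by norm_num) (by norm_num) x
  have e : (fun y => (1 / 2 : ℝ) * f y + (1 - 1 / 2) * - f y) = fun _ => 0 := by
    funext y; ring
  rw [e, hT.zero] at h
  simp only at h
  linarith

/-- uniform smallness at infinity of all iterates -/
lemma SiterN_ext {d : ℕ} {p : ℝ} (hp : 1 < p) {φ : ℝ≥0 → ℝ≥0∞} (hφ : IsPenalty p φ)
    {μ : ℝ → Measure (Ed d)} (hμ : IsConvSemigroup p μ) {t : ℝ} (ht : 0 ≤ t)
    {f : Ed d → ℝ} (hf : IsC0 f) {ε : ℝ} (hε : 0 < ε) :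
    ∃ ρ : ℝ, ∀ x, ρ < ‖x‖ → ∀ n, |SiterN p φ μ n t f x| ≤ ε := by
  have hg := Good.of_isC0 hf
  have hfn : IsC0 (fun x => - f x) := ⟨hf.1.neg, by simpa using hf.2.neg⟩
  obtain ⟨ρ₁, h1⟩ := isC0_ext ((SiterN_nice hp hφ hμ ht 0).c0 f hf) hε
  obtain ⟨ρ₂, h2⟩ := isC0_ext ((SiterN_nice hp hφ hμ ht 0).c0 _ hfn) hε
  refine ⟨max ρ₁ ρ₂, fun x hx n => ?_⟩
  have a1 := abs_lt.1 (h1 x ((le_max_left _ _).trans_lt hx))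
  have a2 := abs_lt.1 (h2 x ((le_max_right _ _).trans_lt hx))
  have b1 : SiterN p φ μ n t f x ≤ SiterN p φ μ 0 t f x :=
    SiterN_anti hp hφ hμ ht hg x (Nat.zero_le n)
  have b2 : SiterN p φ μ n t (fun y => - f y) x ≤ SiterN p φ μ 0 t (fun y => - f y) x :=
    SiterN_anti hp hφ hμ ht hg.neg x (Nat.zero_le n)
  have b3 := (SiterN_nice hp hφ hμ ht n).neg_le hg x
  exact abs_le.2 ⟨by linarith, by linarith⟩

lemma Slim_ext {d : ℕ} {p : ℝ} (hp : 1 < p) {φ : ℝ≥0 → ℝ≥0∞} (hφ : IsPenalty p φ)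
    {μ : ℝ → Measure (Ed d)} (hμ : IsConvSemigroup p μ) {t : ℝ} (ht : 0 ≤ t)
    {f : Ed d → ℝ} (hf : IsC0 f) {ε : ℝ} (hε : 0 < ε) :
    ∃ ρ : ℝ, ∀ x, ρ < ‖x‖ → |Slim p φ μ t f x| ≤ ε ∧ ∀ n, |SiterN p φ μ n t f x| ≤ ε := by
  obtain ⟨ρ, h⟩ := SiterN_ext hp hφ hμ ht hf hε
  exact ⟨ρ, fun x hx => ⟨le_of_tendsto' (Slim_tendsto hp hφ hμ ht (Good.of_isC0 hf) x).abs
    (h x hx), h x hx⟩⟩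

lemma Slim_isC0 {d : ℕ} {p : ℝ} (hp : 1 < p) {φ : ℝ≥0 → ℝ≥0∞} (hφ : IsPenalty p φ)
    {μ : ℝ → Measure (Ed d)} (hμ : IsConvSemigroup p μ) {t : ℝ} (ht : 0 ≤ t)
    {f : Ed d → ℝ} (hf : IsC0 f) : IsC0 (Slim p φ μ t f) := by
  refine ⟨(Slim_good hp hφ hμ ht (Good.of_isC0 hf)).continuous, ?_⟩
  rw [Metric.tendsto_nhds]
  intro ε hε
  obtain ⟨ρ, h⟩ := Slim_ext hp hφ hμ ht hf (half_pos hε)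
  rw [← Metric.cobounded_eq_cocompact, ← comap_norm_atTop, eventually_comap]
  filter_upwards [eventually_gt_atTop ρ] with r hr x hx
  have := (h x (by rw [hx]; exact hr)).1
  rw [Real.dist_eq, sub_zero]
  linarith

lemma Slim_unif {d : ℕ} {p : ℝ} (hp : 1 < p) {φ : ℝ≥0 → ℝ≥0∞} (hφ : IsPenalty p φ)
    {μ : ℝ → Measure (Ed d)} (hμ : IsConvSemigroup p μ) {t : ℝ} (ht : 0 ≤ t)
    {f : Ed d → ℝ} (hf : IsC0 f) :
    TendstoUniformly (fun n x => SiterN p φ μ n t f x) (Slim p φ μ t f) atTop := by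
  have hg := Good.of_isC0 hf
  rw [Metric.tendstoUniformly_iff]
  intro ε hε
  obtain ⟨ρ, h⟩ := Slim_ext hp hφ hμ ht hf (show 0 < ε / 3 by positivity)
  have hD := Antitone.tendstoUniformlyOn_of_forall_tendsto
    (F := fun n x => SiterN p φ μ n t f x) (f := Slim p φ μ t f)
    (isCompact_closedBall (0 : Ed d) ρ)
    (fun n => ((SiterN_nice hp hφ hμ ht n).good f hg).continuous.continuousOn)
    (fun x _ => SiterN_anti hp hφ hμ ht hg x)
    (Slim_good hp hφ hμ ht hg).continuous.continuousOn
    (fun x _ => Slim_tendsto hp hφ hμ ht hg x)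
  rw [Metric.tendstoUniformlyOn_iff] at hD
  filter_upwards [hD ε hε] with n hn x
  by_cases hx : ‖x‖ ≤ ρ
  · exact hn x (by simpa using hx)
  · obtain ⟨a, b⟩ := h x (not_le.1 hx)
    have b := abs_le.1 (b n)
    have a := abs_le.1 a
    rw [Real.dist_eq, abs_lt]
    constructor <;> linarith

lemma Slim_mono {d : ℕ} {p : ℝ} (hp : 1 < p) {φ : ℝ≥0 → ℝ≥0∞} (hφ : IsPenalty p φ)
    {μ : ℝ → Measure (Ed d)} (hμ : IsConvSemigroup p μ) {t : ℝ} (ht : 0 ≤ t)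
    {f g : Ed d → ℝ} (hf : Good f) (hg : Good g) {K : ℝ} (h : ∀ x, f x ≤ g x + K) (x : Ed d) :
    Slim p φ μ t f x ≤ Slim p φ μ t g x + K :=
  le_of_tendsto_of_tendsto' (Slim_tendsto hp hφ hμ ht hf x)
    ((Slim_tendsto hp hφ hμ ht hg x).add_const K)
    fun n => (SiterN_nice hp hφ hμ ht n).mono hf hg h x

lemma Slim_zero {d : ℕ} {p : ℝ} (hp : 1 < p) {φ : ℝ≥0 → ℝ≥0∞} (hφ : IsPenalty p φ)
    {μ : ℝ → Measure (Ed d)} (hμ : IsConvSemigroup p μ) {t : ℝ} (ht : 0 ≤ t) (x : Ed d) :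
    Slim p φ μ t (fun _ => (0:ℝ)) x = 0 := by
  unfold Slim
  have : ∀ n, SiterN p φ μ n t (fun _ => (0:ℝ)) x = 0 := fun n =>
    congrFun (SiterN_nice hp hφ hμ ht n).zero x
  simp [this]

/-- the decreasing limit `𝒮(t)f = lim_n 𝒮ⁿ(t)f` exists and converges
uniformly, `𝒮(t)f ∈ C₀(ℝ^d)`, and `𝒮(t)` is a normalized, monotone, contractive,
convex operator. -/
theorem stmt_7 (d : ℕ) (hd : 1 ≤ d) (p : ℝ) (hp : 1 < p)
    (φ : ℝ≥0 → ℝ≥0∞) (hφ : IsPenalty p φ)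
    (μ : ℝ → Measure (Ed d)) (hμ : IsConvSemigroup p μ)
    (t : ℝ) (ht : 0 ≤ t) (f g : C₀(Ed d, ℝ)) :
    -- (i) the decreasing pointwise limit exists and convergence is uniform
    (∀ x, Antitone fun n => SiterN p φ μ n t (⇑f) x) ∧
    TendstoUniformly (fun n x => SiterN p φ μ n t (⇑f) x) (Slim p φ μ t (⇑f)) atTop ∧
    -- (ii) `𝒮(t)f ∈ C₀(ℝ^d)`
    IsC0 (Slim p φ μ t (⇑f)) ∧
    -- (iii) `𝒮(t)0 = 0`
    (∀ x, Slim p φ μ t (fun _ => (0:ℝ)) x = 0) ∧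
    -- (iv) monotonicity
    ((∀ x, f x ≤ g x) → ∀ x, Slim p φ μ t (⇑f) x ≤ Slim p φ μ t (⇑g) x) ∧
    -- (v) contractivity
    (∀ x, |Slim p φ μ t (⇑f) x - Slim p φ μ t (⇑g) x| ≤ ‖f - g‖) ∧
    -- (vi) convexity
    (∀ l : ℝ, 0 ≤ l → l ≤ 1 → ∀ x,
      Slim p φ μ t (fun y => l * f y + (1 - l) * g y) x ≤
        l * Slim p φ μ t (⇑f) x + (1 - l) * Slim p φ μ t (⇑g) x) := by
  have hfC : IsC0 (⇑f) := ⟨f.continuous, zero_at_infty f⟩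
  have hgC : IsC0 (⇑g) := ⟨g.continuous, zero_at_infty g⟩
  have hf := Good.of_isC0 hfC
  have hg := Good.of_isC0 hgC
  have hn : ∀ x, |f x - g x| ≤ ‖f - g‖ := fun x => by
    have := BoundedContinuousFunction.norm_coe_le_norm (f - g).toBCF x
    simpa using this
  refine ⟨fun x => SiterN_anti hp hφ hμ ht hf x, Slim_unif hp hφ hμ ht hfC,
    Slim_isC0 hp hφ hμ ht hfC, Slim_zero hp hφ hμ ht, fun h x => ?_, fun x => ?_,
    fun l h0 h1 x => ?_⟩
  · simpa using Slim_mono hp hφ hμ ht hf hg (K := 0) (by simpa using h) x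
  · have a := Slim_mono hp hφ hμ ht hf hg (K := ‖f - g‖)
      (fun y => by have := (abs_le.1 (hn y)).2; linarith) x
    have b := Slim_mono hp hφ hμ ht hg hf (K := ‖f - g‖)
      (fun y => by have := (abs_le.1 (hn y)).1; linarith) x
    exact abs_le.2 ⟨by linarith, by linarith⟩
  · exact le_of_tendsto_of_tendsto' (Slim_tendsto hp hφ hμ ht (hf.comb hg h0 h1) x)
      (((Slim_tendsto hp hφ hμ ht hf x).const_mul l).add
        ((Slim_tendsto hp hφ hμ ht hg x).const_mul (1 - l)))
      fun n => (SiterN_nice hp hφ hμ ht n).conv _ _ hf hg l h0 h1 x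
end
end
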